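/- arXiv:2510.05076 — 9 statements merged into one kernel-verified Lean document; each statement's English description precedes it below -/
import Mathlib

section
/- Let P ⊂ ℝⁿ be a lattice polytope whose affine span is all of ℝⁿ. If every edge of P contains at least n lattice points (i.e. P satisfies the LPE(n) property), then P is very ample. -/
/-- A point of `ℝⁿ` is a lattice point if all its coordinates are integers. -/
def IsLatticePoint {n : ℕ} (x : Fin n → ℝ) : Prop := ∀ i, ∃ z : ℤ, x i = (z : ℝ)

/-- The `k`-th dilation `kS = {k • x : x ∈ S}` of a set `S ⊆ ℝⁿ`. -/
def dilate {n : ℕ} (k : ℕ) (P : Set (Fin n → ℝ)) : Set (Fin n → ℝ) :=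
  (fun x => (k : ℝ) • x) '' P

/-- Every lattice point of `kP` is a sum of `k` lattice points of `P`. -/
def IsIDP {n : ℕ} (k : ℕ) (P : Set (Fin n → ℝ)) : Prop :=
  ∀ x ∈ dilate k P, IsLatticePoint x →
    ∃ f : Fin k → (Fin n → ℝ), (∀ i, f i ∈ P ∧ IsLatticePoint (f i)) ∧ x = ∑ i, f i

/-- A polytope is normal if for every `k ≥ 1` every lattice point of `kP`
is a sum of `k` lattice points of `P`. -/
def IsNormal {n : ℕ} (P : Set (Fin n → ℝ)) : Prop := ∀ k : ℕ, 1 ≤ k → IsIDP k P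

/-- A polytope is very ample if there is `k₀` such that for every `k ≥ k₀` every
lattice point of `kP` is a sum of `k` lattice points of `P`. -/
def IsVeryAmple {n : ℕ} (P : Set (Fin n → ℝ)) : Prop :=
  ∃ k₀ : ℕ, ∀ k : ℕ, k₀ ≤ k → IsIDP k P

/-- The rectangular simplex `Δ(λ) = conv{0, λ₁e₁, …, λₙeₙ}`. -/
def rectSimplex {n : ℕ} (lam : Fin n → ℕ) : Set (Fin n → ℝ) :=
  convexHull ℝ (insert 0 (Set.range fun i => Pi.single i ((lam i : ℝ))))

/-- An edge of `P`: a segment between two distinct extreme points of `P`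
which is an extreme subset of `P`. -/
def IsEdge {n : ℕ} (P : Set (Fin n → ℝ)) (v w : Fin n → ℝ) : Prop :=
  v ≠ w ∧ v ∈ P.extremePoints ℝ ∧ w ∈ P.extremePoints ℝ ∧
    IsExtreme ℝ P (segment ℝ v w)

/-- `P` has at least `k` lattice points on every edge. -/
def LPE {n : ℕ} (k : ℕ) (P : Set (Fin n → ℝ)) : Prop :=
  ∀ v w, IsEdge P v w →
    ∃ S : Finset (Fin n → ℝ), k ≤ S.card ∧ ∀ x ∈ S, x ∈ segment ℝ v w ∧ IsLatticePoint x

/-- The normality index: the least `k₀` such that `kP` is normal for all `k ≥ k₀`. -/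
noncomputable def munorm {n : ℕ} (P : Set (Fin n → ℝ)) : ℕ :=
  sInf {k₀ : ℕ | ∀ k : ℕ, k₀ ≤ k → IsNormal (dilate k P)}

/-- Almost 1-normality: with `L = lcm λᵢ`, `Lᵢ = L/λᵢ`, `d = gcd Lᵢ`, the number
`L - d` lies in the additive submonoid of `ℕ` generated by the `Lᵢ`. -/
def IsA1N {n : ℕ} (lam : Fin n → ℕ) : Prop :=
  Finset.univ.lcm lam - Finset.univ.gcd (fun i => Finset.univ.lcm lam / lam i) ∈
    AddSubmonoid.closure (Set.range fun i => Finset.univ.lcm lam / lam i)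

/-!
Let `v` be a vertex of `P` and `d = dim P ≥ 2`. The cone generated by `P - v` is generated by the
edge directions at `v`, and an edge with at least `d` lattice points contains two at distance at
most `1 / (d - 1)` of its length. So the cone is generated by the lattice vectors `w` with
`(d - 1) • w ∈ P - v`. Write a lattice point `x` of the cone as a conic combination of at most `d`
such vectors, with the largest possible coefficient sum. If the fractional parts of the
coefficients had sum `> d - 1`, their complements to `1` would have sum `< 1` and define one more
vector of this kind, and pivoting it in would increase the coefficient sum. Hence the fractional
part of `x` lies in `P - v`, and `x` is a sum of lattice points of `P - v`.

For very ampleness, write `x ∈ k • P` as a sum of vertices, with multiplicities, plus one of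
finitely many remainders. For large `k` some vertex `v` has large multiplicity, and enough copies of
`v` turn the decomposition of the remainder over `P - v` into one over `P`.
-/

open scoped Pointwise

section ConicRepresentation

variable {𝕜 E : Type*} [Field 𝕜] [AddCommGroup E] [Module 𝕜 E]

lemma linearIndepOn_insert_sdiff_singleton {s : Set E} (hs : LinearIndepOn 𝕜 id s) {e : E →₀ 𝕜}
    (hes : ↑e.support ⊆ s) {a : E} (ha : e a ≠ 0) :
    LinearIndepOn 𝕜 id (insert (Finsupp.linearCombination 𝕜 id e) (s \ {a})) := by
  refine (hs.mono Set.sdiff_subset).insert fun hmem ↦ ha ?_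
  obtain ⟨l, hl, hle⟩ := (Finsupp.mem_span_image_iff_linearCombination 𝕜).1 hmem
  have : l = e := linearIndepOn_iffₛ.1 hs l (hl.trans Set.sdiff_subset) e hes hle
  rw [← this]
  exact Finsupp.notMem_support_iff.1 fun h ↦ (hl h).2 rfl

variable [LinearOrder 𝕜]

/-- `f` is a representation of `x` as a conic combination of linearly independent elements of
`A`; in linear programming, a basic feasible solution. -/
structure IsBasicRep (A : Set E) (x : E) (f : E →₀ 𝕜) : Prop where
  support_subset : ↑f.support ⊆ A
  nonneg : 0 ≤ f
  linearCombination_eq : Finsupp.linearCombination 𝕜 id f = x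
  linearIndepOn : LinearIndepOn 𝕜 id (f.support : Set E)

lemma finite_isBasicRep {A : Set E} (hA : A.Finite) (x : E) :
    {f : E →₀ 𝕜 | IsBasicRep A x f}.Finite := by
  refine Set.Finite.of_injOn (f := fun f ↦ (f.support : Set E)) (fun f hf ↦ hf.support_subset)
    (fun f hf g hg hfg ↦ ?_) hA.finite_subsets
  refine linearIndepOn_iffₛ.1 hf.linearIndepOn f (fun _ h ↦ h) g hfg.ge ?_
  rw [hf.linearCombination_eq, hg.linearCombination_eq]

variable [IsStrictOrderedRing 𝕜]

lemma exists_pos_sub_smul_nonneg {α : Type*} {f g : α →₀ 𝕜} (hf : 0 ≤ f)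
    (hgf : g.support ⊆ f.support) (hg : ∃ a, 0 < g a) :
    ∃ t > 0, 0 ≤ f - t • g ∧ ∃ a, 0 < g a ∧ f a = t * g a := by
  have mem_support {a : α} (ha : 0 < g a) : a ∈ f.support :=
    hgf (Finsupp.mem_support_iff.2 ha.ne')
  obtain ⟨b, hb⟩ := hg
  obtain ⟨a, ha, hmin⟩ := (f.support.filter (0 < g ·)).exists_min_image (fun a ↦ f a / g a)
    ⟨b, Finset.mem_filter.2 ⟨mem_support hb, hb⟩⟩
  obtain ⟨haf, hga⟩ := Finset.mem_filter.1 ha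
  have ht : 0 < f a / g a := div_pos ((hf a).lt_of_ne' (Finsupp.mem_support_iff.1 haf)) hga
  refine ⟨f a / g a, ht, fun c ↦ ?_, a, hga, (div_mul_cancel₀ _ hga.ne').symm⟩
  simp only [Finsupp.coe_zero, Pi.zero_apply, Finsupp.coe_sub, Finsupp.coe_smul, Pi.sub_apply,
    Pi.smul_apply, smul_eq_mul, sub_nonneg]
  rcases le_or_gt (g c) 0 with hc | hc
  · exact (mul_nonpos_of_nonneg_of_nonpos ht.le hc).trans (hf c)
  · exact (le_div_iff₀ hc).1 (hmin c (Finset.mem_filter.2 ⟨mem_support hc, hc⟩))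

lemma exists_pos_linearCombination_eq_zero {s : Set E} (hs : ¬ LinearIndepOn 𝕜 id s) :
    ∃ g : E →₀ 𝕜, ↑g.support ⊆ s ∧ Finsupp.linearCombination 𝕜 id g = 0 ∧ ∃ a, 0 < g a := by
  rw [linearIndepOn_iff] at hs
  push Not at hs
  obtain ⟨g, hgs, hg, hg0⟩ := hs
  obtain ⟨a, ha⟩ := Finsupp.ne_iff.1 hg0
  rcases lt_or_gt_of_ne ha with ha | ha
  · exact ⟨-g, by rwa [Finsupp.support_neg], by rw [map_neg, hg, neg_zero], a, neg_pos.2 ha⟩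
  · exact ⟨g, hgs, hg, a, ha⟩

-- Carathéodory's theorem for cones: a representation of minimal support is basic.
lemma exists_isBasicRep {A : Set E} {x : E} (hx : x ∈ PointedCone.hull 𝕜 A) :
    ∃ f : E →₀ 𝕜, IsBasicRep A x f := by
  obtain ⟨f₀, hf₀⟩ := PointedCone.mem_hull_set.1 hx
  obtain ⟨f, ⟨hfA, hf, hfx⟩, hmin⟩ := exists_minimalFor_of_wellFoundedLT
    (fun f : E →₀ 𝕜 ↦ ↑f.support ⊆ A ∧ (∀ a, 0 ≤ f a) ∧ f.sum (fun a r ↦ r • a) = x)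
    Finsupp.support ⟨f₀, hf₀⟩
  refine ⟨f, hfA, hf, hfx, ?_⟩
  by_contra hdep
  obtain ⟨g, hgf, hg0, hgpos⟩ := exists_pos_linearCombination_eq_zero hdep
  obtain ⟨t, -, ht, a, hga, hfa⟩ := exists_pos_sub_smul_nonneg hf (Finset.coe_subset.1 hgf) hgpos
  have hsub : (f - t • g).support ⊆ f.support := by
    classical
    exact Finsupp.support_sub.trans
      (Finset.union_subset le_rfl (Finsupp.support_smul.trans (Finset.coe_subset.1 hgf)))
  have hrep : Finsupp.linearCombination 𝕜 id (f - t • g) = x := by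
    rw [map_sub, map_smul, hg0, smul_zero, sub_zero, ← hfx]; rfl
  have hle := hmin ⟨(Finset.coe_subset.2 hsub).trans hfA, ht, hrep⟩ hsub
  have ha : a ∈ (f - t • g).support := hle (hgf (Finsupp.mem_support_iff.2 hga.ne'))
  simp [hfa] at ha

-- The pivot step of the simplex method: `y := ∑ e a • a` enters the basis.
lemma IsBasicRep.exists_pivot {A : Set E} {x : E} {f e : E →₀ 𝕜} (hf : IsBasicRep A x f)
    (he : 0 ≤ e) (he0 : e ≠ 0) (hef : e.support ⊆ f.support)
    (heA : Finsupp.linearCombination 𝕜 id e ∈ A) :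
    ∃ f' : E →₀ 𝕜, IsBasicRep A x f' ∧ ∃ t > 0, f'.degree = f.degree + t * (1 - e.degree) := by
  classical
  set y := Finsupp.linearCombination 𝕜 id e with hy
  obtain ⟨b, hb⟩ := Finsupp.ne_iff.1 he0
  obtain ⟨t, ht, hnonneg, a, hea, hfa⟩ :=
    exists_pos_sub_smul_nonneg hf.nonneg hef ⟨b, (he b).lt_of_ne' hb⟩
  have hsupp : (↑(f - t • e + Finsupp.single y t).support : Set E) ⊆
      insert y (↑f.support \ {a}) := by
    intro c hc
    rcases eq_or_ne c y with rfl | hcy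
    · exact Set.mem_insert _ _
    · have hc' : f c - t * e c ≠ 0 := by simpa [Finsupp.single_eq_of_ne hcy] using hc
      refine Or.inr ⟨Finsupp.mem_support_iff.2 fun h ↦ hc' ?_, fun h ↦ hc' ?_⟩
      · have : e c = 0 := Finsupp.notMem_support_iff.1 fun h' ↦ Finsupp.mem_support_iff.1 (hef h') h
        rw [h, this, mul_zero, sub_zero]
      · rw [Set.mem_singleton_iff.1 h, hfa, sub_self]
  refine ⟨f - t • e + Finsupp.single y t, ⟨?_, ?_, ?_, ?_⟩, t, ht, ?_⟩
  · exact hsupp.trans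
      (Set.insert_subset heA (Set.sdiff_subset.trans hf.support_subset))
  · exact add_nonneg hnonneg (Finsupp.single_nonneg.2 ht.le)
  · rw [map_add, map_sub, map_smul, hf.linearCombination_eq, Finsupp.linearCombination_single, ← hy,
      id, sub_add_cancel]
  · exact (linearIndepOn_insert_sdiff_singleton hf.linearIndepOn hef hea.ne').mono hsupp
  · have : (t • e).degree = t * e.degree := by
      rw [Finsupp.degree_eq_weight_one]
      exact (Finsupp.linearCombination 𝕜 fun _ : E ↦ (1 : 𝕜)).map_smul t e
    rw [map_add, map_sub, this, Finsupp.degree_single]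
    ring

end ConicRepresentation

section FractionalPart

variable {α 𝕜 : Type*} [Field 𝕜] [LinearOrder 𝕜] [IsStrictOrderedRing 𝕜] [FloorRing 𝕜]

/-- The coordinatewise fractional part of a finitely supported function; applied to the coefficients
of a conic combination it gives the part that is not visibly a sum of generators. -/
noncomputable def fractPart (f : α →₀ 𝕜) : α →₀ 𝕜 :=
  f.mapRange Int.fract Int.fract_zero

lemma fractPart_nonneg (f : α →₀ 𝕜) : 0 ≤ fractPart f := fun a ↦ Int.fract_nonneg (f a)

lemma support_fractPart_subset (f : α →₀ 𝕜) : (fractPart f).support ⊆ f.support :=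
  Finsupp.support_mapRange

lemma fractPart_eq_zero_of_fractPart_neg_eq_zero {f : α →₀ 𝕜} (h : fractPart (-f) = 0) :
    fractPart f = 0 :=
  Finsupp.ext fun a ↦ Int.fract_neg_eq_zero.1 (DFunLike.congr_fun h a)

lemma degree_fractPart_add_degree_fractPart_neg_le (f : α →₀ 𝕜) :
    (fractPart f).degree + (fractPart (-f)).degree ≤ f.support.card := by
  have fract_add_fract_neg_le (r : 𝕜) : Int.fract r + Int.fract (-r) ≤ 1 := by
    simpa using Int.fract_add_fract_le r (-r)
  have hsupp : (fractPart f + fractPart (-f)).support ⊆ f.support := by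
    classical
    exact Finsupp.support_add.trans (Finset.union_subset (support_fractPart_subset f)
      ((support_fractPart_subset _).trans_eq (Finsupp.support_neg f)))
  calc (fractPart f).degree + (fractPart (-f)).degree
      = ∑ a ∈ (fractPart f + fractPart (-f)).support, (fractPart f + fractPart (-f)) a := by
        rw [← map_add, Finsupp.degree_apply]
    _ ≤ (fractPart f + fractPart (-f)).support.card := by
        rw [← nsmul_one]
        exact Finset.sum_le_card_nsmul _ _ 1 fun a _ ↦ fract_add_fract_neg_le (f a)
    _ ≤ f.support.card := by exact_mod_cast Finset.card_le_card hsupp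

end FractionalPart

section IntegralDecomposition

variable {𝕜 E : Type*} [Field 𝕜] [LinearOrder 𝕜] [IsStrictOrderedRing 𝕜]
  [AddCommGroup E] [Module 𝕜 E]

lemma linearCombination_mem_of_degree_le {Q : Set E} (hQ : Convex 𝕜 Q) (h0 : 0 ∈ Q) {r : 𝕜}
    (hr : 0 < r) {f : E →₀ 𝕜} (hf : 0 ≤ f) (hfQ : ∀ a ∈ f.support, r • a ∈ Q)
    (hdeg : f.degree ≤ r) : Finsupp.linearCombination 𝕜 id f ∈ Q := by
  rcases eq_or_ne f 0 with rfl | hf0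
  · rwa [map_zero]
  have hpos : 0 < ∑ a ∈ f.support, f a :=
    Finset.sum_pos (fun a ha ↦ (hf a).lt_of_ne' (Finsupp.mem_support_iff.1 ha))
      (Finsupp.support_nonempty_iff.2 hf0)
  have hmem := hQ.smul_mem_of_zero_mem h0 (hQ.centerMass_mem (fun a _ ↦ hf a) hpos hfQ)
    ⟨div_nonneg hpos.le hr.le, (div_le_one hr).2 hdeg⟩
  simp only [Finset.centerMass, smul_comm _ r, ← Finset.smul_sum] at hmem
  rwa [div_eq_inv_mul, mul_smul, smul_inv_smul₀ hpos.ne', smul_inv_smul₀ hr.ne'] at hmem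

variable [FloorRing 𝕜]

lemma linearCombination_eq_sum_floor_add_fractPart (f : E →₀ 𝕜) :
    Finsupp.linearCombination 𝕜 id f =
      ∑ a ∈ f.support, ⌊f a⌋ • a + Finsupp.linearCombination 𝕜 id (fractPart f) := by
  rw [Finsupp.linearCombination_apply_of_mem_supported (s := f.support) 𝕜
      (support_fractPart_subset f), Finsupp.linearCombination_apply, Finsupp.sum,
    ← Finset.sum_add_distrib]
  refine Finset.sum_congr rfl fun a _ ↦ ?_
  rw [← Int.cast_smul_eq_zsmul 𝕜, id, ← add_smul]
  exact congrArg (· • a) (Int.floor_add_fract (f a)).symm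

lemma linearCombination_fractPart_mem {L : AddSubgroup E} {f : E →₀ 𝕜}
    (hfL : (f.support : Set E) ⊆ L) (hf : Finsupp.linearCombination 𝕜 id f ∈ L) :
    Finsupp.linearCombination 𝕜 id (fractPart f) ∈ L := by
  rw [eq_sub_of_add_eq' (linearCombination_eq_sum_floor_add_fractPart f).symm]
  exact sub_mem hf (sum_mem fun a ha ↦ zsmul_mem (hfL ha) _)

variable {L : AddSubgroup E} {Q : Set E} {N : ℕ}

lemma mem_closure_of_degree_fractPart_le (hN : 1 ≤ N) (hQ : Convex 𝕜 Q) (h0 : 0 ∈ Q) {f : E →₀ 𝕜}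
    (hf : 0 ≤ f) (hfA : (f.support : Set E) ⊆ {w | w ∈ L ∧ (N : 𝕜) • w ∈ Q})
    (hfL : Finsupp.linearCombination 𝕜 id f ∈ L) (hdeg : (fractPart f).degree ≤ N) :
    Finsupp.linearCombination 𝕜 id f ∈ AddSubmonoid.closure (L ∩ Q) := by
  have hN0 : (0 : 𝕜) < N := Nat.cast_pos.2 hN
  have hsupp : ∀ a ∈ f.support, a ∈ (L : Set E) ∩ Q := fun a ha ↦ by
    refine ⟨(hfA ha).1, ?_⟩
    rw [← inv_smul_smul₀ hN0.ne' a]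
    exact hQ.smul_mem_of_zero_mem h0 (hfA ha).2
      ⟨inv_nonneg.2 hN0.le, inv_le_one_of_one_le₀ (Nat.one_le_cast.2 hN)⟩
  have hfract : Finsupp.linearCombination 𝕜 id (fractPart f) ∈ Q :=
    linearCombination_mem_of_degree_le hQ h0 hN0 (fractPart_nonneg f)
      (fun a ha ↦ (hfA (support_fractPart_subset f ha)).2) hdeg
  rw [linearCombination_eq_sum_floor_add_fractPart]
  refine add_mem (sum_mem fun a ha ↦ ?_) (AddSubmonoid.subset_closure
    ⟨linearCombination_fractPart_mem (fun a ha ↦ (hfA ha).1) hfL, hfract⟩)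
  rw [← Int.toNat_of_nonneg (Int.floor_nonneg.2 (hf a)), natCast_zsmul]
  exact nsmul_mem (AddSubmonoid.subset_closure (hsupp a ha)) _

-- The entering vector is `∑ ⌈f a⌉ • a - x`, whose coefficients `⌈f a⌉ - f a` have sum `< 1`.
lemma IsBasicRep.exists_degree_lt (hQ : Convex 𝕜 Q) (h0 : 0 ∈ Q) {x : E} (hx : x ∈ L)
    {f : E →₀ 𝕜} (hf : IsBasicRep {w | w ∈ L ∧ (N : 𝕜) • w ∈ Q} x f)
    (hcard : f.support.card ≤ N + 1) (hdeg : N < (fractPart f).degree) :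
    ∃ f' : E →₀ 𝕜, IsBasicRep {w | w ∈ L ∧ (N : 𝕜) • w ∈ Q} x f' ∧ f.degree < f'.degree := by
  have hgap : (fractPart (-f)).degree < 1 := by
    have : (f.support.card : 𝕜) ≤ N + 1 := by exact_mod_cast hcard
    linarith [degree_fractPart_add_degree_fractPart_neg_le f]
  have hgap0 : fractPart (-f) ≠ 0 := fun h ↦ by
    rw [fractPart_eq_zero_of_fractPart_neg_eq_zero h, map_zero] at hdeg
    exact hdeg.not_ge (Nat.cast_nonneg N)
  have hgapf : (fractPart (-f)).support ⊆ f.support :=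
    (support_fractPart_subset _).trans_eq (Finsupp.support_neg f)
  have hgapL : Finsupp.linearCombination 𝕜 id (fractPart (-f)) ∈ L := by
    refine linearCombination_fractPart_mem ?_ ?_
    · rw [Finsupp.support_neg]
      exact fun a ha ↦ (hf.support_subset ha).1
    · rw [map_neg, hf.linearCombination_eq]
      exact neg_mem hx
  have hgapQ : (N : 𝕜) • Finsupp.linearCombination 𝕜 id (fractPart (-f)) ∈ Q := by
    refine linearCombination_mem_of_degree_le (hQ.smul_preimage (N : 𝕜)) ?_ one_pos
      (fractPart_nonneg _) (fun a ha ↦ ?_) hgap.le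
    · rwa [Set.mem_preimage, smul_zero]
    · rw [one_smul]
      exact (hf.support_subset (hgapf ha)).2
  obtain ⟨f', hf', t, ht, hdeg'⟩ :=
    hf.exists_pivot (fractPart_nonneg _) hgap0 hgapf ⟨hgapL, hgapQ⟩
  refine ⟨f', hf', hdeg' ▸ lt_add_of_pos_right _ (mul_pos ht (sub_pos.2 hgap))⟩

theorem mem_closure_of_mem_hull (hN : 1 ≤ N) (hQ : Convex 𝕜 Q) (h0 : 0 ∈ Q)
    (hfin : {w | w ∈ L ∧ (N : 𝕜) • w ∈ Q}.Finite)
    (hdim : Module.finrank 𝕜 (Submodule.span 𝕜 {w | w ∈ L ∧ (N : 𝕜) • w ∈ Q}) ≤ N + 1)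
    {x : E} (hxL : x ∈ L) (hx : x ∈ PointedCone.hull 𝕜 {w | w ∈ L ∧ (N : 𝕜) • w ∈ Q}) :
    x ∈ AddSubmonoid.closure (L ∩ Q) := by
  obtain ⟨f, hf, hmax⟩ := (finite_isBasicRep hfin x).exists_maximalFor Finsupp.degree _
    (exists_isBasicRep hx)
  have hcard : f.support.card ≤ N + 1 := by
    have := FiniteDimensional.span_of_finite 𝕜 hfin
    rw [← finrank_span_finset_eq_card hf.linearIndepOn]
    exact (Submodule.finrank_mono (Submodule.span_mono hf.support_subset)).trans hdim
  rw [← hf.linearCombination_eq]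
  refine mem_closure_of_degree_fractPart_le hN hQ h0 hf.nonneg hf.support_subset
    (hf.linearCombination_eq ▸ hxL) (le_of_not_gt fun hdeg ↦ ?_)
  obtain ⟨f', hf', hlt⟩ := hf.exists_degree_lt hQ h0 hxL hcard hdeg
  exact hlt.not_ge (hmax hf' hlt.le)

end IntegralDecomposition

section VertexCone

variable {𝕜 E : Type*} [Field 𝕜] [LinearOrder 𝕜] [IsStrictOrderedRing 𝕜]
  [AddCommGroup E] [Module 𝕜 E] {P : Set E} {v : E}

/-- The cone generated by `P - v`; for a polytope `P` with vertex `v` it is the tangent cone. -/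
def vertexCone (𝕜 : Type*) {E : Type*} [Field 𝕜] [LinearOrder 𝕜] [IsStrictOrderedRing 𝕜]
    [AddCommGroup E] [Module 𝕜 E] (P : Set E) (v : E) : PointedCone 𝕜 E :=
  PointedCone.hull 𝕜 {q | v + q ∈ P}

lemma sub_mem_vertexCone {p : E} (hp : p ∈ P) : p - v ∈ vertexCone 𝕜 P v :=
  PointedCone.subset_hull (by rwa [Set.mem_ofPred_eq, add_sub_cancel])

lemma exists_add_smul_mem_of_mem_vertexCone (hP : Convex 𝕜 P) (hv : v ∈ P) {q : E}
    (hq : q ∈ vertexCone 𝕜 P v) : ∃ c : 𝕜, 0 < c ∧ v + c • q ∈ P := by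
  have hle : vertexCone 𝕜 P v ≤ (ConvexCone.hull 𝕜 {q | v + q ∈ P}).toPointedCone
      (ConvexCone.subset_hull (by rwa [Set.mem_ofPred_eq, add_zero])) :=
    Submodule.span_le.2 ConvexCone.subset_hull
  obtain ⟨r, hr, p, hp, rfl⟩ :=
    (ConvexCone.mem_hull_of_convex (hP.translate_preimage_right v)).1 (hle hq)
  exact ⟨r⁻¹, inv_pos.2 hr, by rwa [inv_smul_smul₀ hr.ne']⟩

lemma salient_vertexCone (hP : Convex 𝕜 P) (hv : v ∈ P.extremePoints 𝕜) :
    (vertexCone 𝕜 P v).toConvexCone.Salient := by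
  intro q hq hq0 hq'
  obtain ⟨a, ha, hax⟩ := exists_add_smul_mem_of_mem_vertexCone hP hv.1 hq
  obtain ⟨b, hb, hbx⟩ := exists_add_smul_mem_of_mem_vertexCone hP hv.1 hq'
  have hmem : v ∈ openSegment 𝕜 (v + a • q) (v + b • -q) := by
    refine ⟨b / (a + b), a / (a + b), by positivity, by positivity, by field_simp; ring, ?_⟩
    have : b / (a + b) + a / (a + b) = 1 := by field_simp; ring
    linear_combination (norm := module) this • v
  exact smul_ne_zero ha.ne' hq0 (add_eq_left.1 (hv.2 hax hbx hmem))

lemma isExtreme_of_isFaceOf_vertexCone {F : PointedCone 𝕜 E} (hF : F.IsFaceOf (vertexCone 𝕜 P v)) :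
    IsExtreme 𝕜 P {p ∈ P | p - v ∈ F} := by
  refine ⟨Set.sep_subset _ _, fun x hx y hy z hz ⟨a, b, ha, hb, hab, hxyz⟩ ↦ ⟨hx, ?_⟩⟩
  refine hF.mem_of_smul_add_smul_mem_left (sub_mem_vertexCone hx) (sub_mem_vertexCone hy) ha hb ?_
  convert hz.2 using 1
  rw [← hxyz, smul_sub, smul_sub, sub_add_sub_comm, ← add_smul, hab, one_smul]

lemma hull_singleton_isFaceOf_hull_insert {S : Set E} {t : E} (ht : t ∉ PointedCone.hull 𝕜 S)
    (hsal : (PointedCone.hull 𝕜 (insert t S)).toConvexCone.Salient) :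
    (PointedCone.hull 𝕜 {t}).IsFaceOf (PointedCone.hull 𝕜 (insert t S)) := by
  have hS : PointedCone.hull 𝕜 S ≤ PointedCone.hull 𝕜 (insert t S) :=
    Submodule.span_mono (Set.subset_insert t S)
  have eq_zero {x : E} (hx : x ∈ PointedCone.hull 𝕜 (insert t S))
      (hx' : -x ∈ PointedCone.hull 𝕜 (insert t S)) : x = 0 := by
    by_contra h
    exact hsal x hx h hx'
  refine .of_mem_of_add_mem_left (Submodule.span_mono (by simp)) fun {x y} hx hy hxy ↦ ?_
  obtain ⟨a, x', hx', rfl⟩ := Submodule.mem_span_insert.1 hx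
  obtain ⟨b, y', hy', rfl⟩ := Submodule.mem_span_insert.1 hy
  obtain ⟨c, hc⟩ := Submodule.mem_span_singleton.1 hxy
  have hsum : x' + y' = ((c : 𝕜) - a - b) • t := by
    have : (c : 𝕜) • t = (a : 𝕜) • t + x' + ((b : 𝕜) • t + y') := hc
    rw [sub_smul, sub_smul, this]
    abel
  have hle : (c : 𝕜) - a - b ≤ 0 := by
    by_contra! hpos
    refine ht ?_
    have := PointedCone.smul_mem _ (inv_nonneg.2 hpos.le) (add_mem hx' hy')
    rwa [hsum, inv_smul_smul₀ hpos.ne'] at this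
  have hsum0 : x' + y' = 0 := by
    refine eq_zero (hS (add_mem hx' hy')) ?_
    rw [hsum, ← neg_smul]
    exact PointedCone.smul_mem _ (neg_nonneg.2 hle) (Submodule.subset_span (Set.mem_insert t S))
  have hx0 : x' = 0 :=
    eq_zero (hS hx') (by rw [neg_eq_of_add_eq_zero_right hsum0]; exact hS hy')
  rw [hx0, add_zero]
  exact Submodule.mem_span_singleton.2 ⟨a, rfl⟩

-- In a minimal generating set of a salient cone every element spans an extreme ray.
lemma hull_le_of_forall_isFaceOf {B : Set E} (hB : B.Finite)
    (hsal : (PointedCone.hull 𝕜 B).toConvexCone.Salient) {C : PointedCone 𝕜 E}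
    (hC : ∀ t ∈ B, t ≠ 0 → (PointedCone.hull 𝕜 {t}).IsFaceOf (PointedCone.hull 𝕜 B) → t ∈ C) :
    PointedCone.hull 𝕜 B ≤ C := by
  obtain ⟨T, ⟨hTB, hT⟩, hmin⟩ :=
    (hB.finite_subsets.subset (Set.sep_subset _ (fun T ↦ PointedCone.hull 𝕜 T =
      PointedCone.hull 𝕜 B))).exists_minimal ⟨B, Set.Subset.rfl, rfl⟩
  have notMem_hull {t : E} (ht : t ∈ T) : t ∉ PointedCone.hull 𝕜 (T \ {t}) := fun hmem ↦ by
    have hhull : PointedCone.hull 𝕜 (T \ {t}) = PointedCone.hull 𝕜 B := by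
      have := Submodule.span_insert_eq_span hmem
      rw [Set.insert_sdiff_self_of_mem ht] at this
      exact this.symm.trans hT
    exact (hmin ⟨Set.sdiff_subset.trans hTB, hhull⟩ Set.sdiff_subset ht).2 rfl
  rw [← hT]
  refine Submodule.span_le.2 fun t ht ↦ hC t (hTB ht) ?_ ?_
  · rintro rfl
    exact notMem_hull ht (zero_mem _)
  · have hins : insert t (T \ {t}) = T := Set.insert_sdiff_self_of_mem ht
    have := hull_singleton_isFaceOf_hull_insert (notMem_hull ht) (by rwa [hins, hT])
    rwa [hins, hT] at this

lemma right_mem_extremePoints_segment (a b : E) : b ∈ (segment 𝕜 a b).extremePoints 𝕜 := by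
  refine ⟨right_mem_segment 𝕜 a b, ?_⟩
  rw [segment_eq_image']
  rintro _ ⟨θ, hθ, rfl⟩ _ ⟨η, hη, rfl⟩ ⟨c, d, hc, hd, hcd, h⟩
  have hzero : (c * (1 - θ) + d * (1 - η)) • (b - a) = 0 := by
    linear_combination (norm := module) (-1 : 𝕜) • h + hcd • b
  rcases smul_eq_zero.1 hzero with h0 | h0
  · have : θ = 1 := by nlinarith [hθ.2, hη.2]
    simp [this]
  · simp [sub_eq_zero.1 h0]

lemma vertexCone_convexHull_le (V : Finset E) (v : E) :
    vertexCone 𝕜 (convexHull 𝕜 (V : Set E)) v ≤ PointedCone.hull 𝕜 ((· - v) '' (V : Set E)) := by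
  refine Submodule.span_le.2 fun q hq ↦ ?_
  obtain ⟨w, hw0, hw1, hw⟩ := Finset.mem_convexHull'.1 hq
  have hsum : q = ∑ y ∈ V, w y • (y - v) := by
    simp only [smul_sub, Finset.sum_sub_distrib, ← Finset.sum_smul, hw1, hw, one_smul,
      add_sub_cancel_left]
  rw [hsum]
  exact sum_mem fun y hy ↦ PointedCone.smul_mem _ (hw0 y hy)
    (PointedCone.subset_hull (Set.mem_image_of_mem _ hy))

end VertexCone

section Edges

variable {E : Type*} [AddCommGroup E] [Module ℝ E] [TopologicalSpace E] [T2Space E]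
  [IsTopologicalAddGroup E] [ContinuousSMul ℝ E] {P : Set E} {v : E}

lemma exists_sep_hull_singleton_eq_segment (hP : Convex ℝ P) (hPc : IsCompact P) (hv : v ∈ P)
    {t : E} (ht0 : t ≠ 0) (ht : v + t ∈ P) :
    ∃ s : ℝ, 1 ≤ s ∧ {p ∈ P | p - v ∈ PointedCone.hull ℝ {t}} = segment ℝ v (v + s • t) := by
  have hemb : Topology.IsClosedEmbedding (fun s : ℝ ↦ v + s • t) :=
    (Homeomorph.addLeft v).isClosedEmbedding.comp (isClosedEmbedding_smul_left ht0)
  have htP : v + (1 : ℝ) • t ∈ P := by rwa [one_smul]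
  obtain ⟨s, hsP, hsmax⟩ := (hemb.isCompact_preimage hPc).exists_isGreatest ⟨1, htP⟩
  have hs : 1 ≤ s := hsmax htP
  have hs0 : 0 < s := one_pos.trans_le hs
  refine ⟨s, hs, Set.Subset.antisymm (fun p hp ↦ ?_) fun p hp ↦ ⟨hP.segment_subset hv hsP hp, ?_⟩⟩
  · obtain ⟨hpP, hpt⟩ := hp
    obtain ⟨r, hr : (r : ℝ) • t = p - v⟩ := Submodule.mem_span_singleton.1 hpt
    have hpr : p = v + (r : ℝ) • t := by rw [hr, add_sub_cancel]
    have hrs : (r : ℝ) ≤ s := hsmax (hpr ▸ hpP : v + (r : ℝ) • t ∈ P)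
    rw [segment_eq_image']
    refine ⟨r / s, ⟨div_nonneg r.2 hs0.le, (div_le_one hs0).2 hrs⟩, ?_⟩
    simp only [add_sub_cancel_left, smul_smul, div_mul_cancel₀ _ hs0.ne', hpr]
  · rw [segment_eq_image'] at hp
    obtain ⟨θ, hθ, rfl⟩ := hp
    simp only [add_sub_cancel_left]
    exact PointedCone.smul_mem _ hθ.1 (PointedCone.smul_mem _ hs0.le (PointedCone.subset_hull rfl))

lemma exists_edge_of_isFaceOf (hP : Convex ℝ P) (hPc : IsCompact P) (hv : v ∈ P)
    {t : E} (ht0 : t ≠ 0) (ht : v + t ∈ P)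
    (hface : (PointedCone.hull ℝ {t}).IsFaceOf (vertexCone ℝ P v)) :
    ∃ s : ℝ, 0 < s ∧ v + s • t ∈ P.extremePoints ℝ ∧ IsExtreme ℝ P (segment ℝ v (v + s • t)) := by
  obtain ⟨s, hs, hseg⟩ := exists_sep_hull_singleton_eq_segment hP hPc hv ht0 ht
  have hext : IsExtreme ℝ P (segment ℝ v (v + s • t)) :=
    hseg ▸ isExtreme_of_isFaceOf_vertexCone hface
  exact ⟨s, one_pos.trans_le hs,
    hext.extremePoints_subset_extremePoints (right_mem_extremePoints_segment _ _), hext⟩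

theorem vertexCone_le_of_forall_edge {V : Finset E} (hPV : P = convexHull ℝ (V : Set E))
    (hv : v ∈ P.extremePoints ℝ) {C : PointedCone ℝ E}
    (hC : ∀ w ∈ P.extremePoints ℝ, v ≠ w → IsExtreme ℝ P (segment ℝ v w) → w - v ∈ C) :
    vertexCone ℝ P v ≤ C := by
  have hP : Convex ℝ P := hPV ▸ convex_convexHull ℝ _
  have hPc : IsCompact P := hPV ▸ V.finite_toSet.isCompact_convexHull ℝ
  have hVP : (V : Set E) ⊆ P := hPV ▸ subset_convexHull ℝ _
  have hgen : vertexCone ℝ P v = PointedCone.hull ℝ ((· - v) '' (V : Set E)) := by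
    refine le_antisymm (hPV ▸ vertexCone_convexHull_le V v) (Submodule.span_le.2 ?_)
    rintro _ ⟨y, hy, rfl⟩
    exact sub_mem_vertexCone (hVP hy)
  rw [hgen]
  refine hull_le_of_forall_isFaceOf (V.finite_toSet.image _)
    (hgen ▸ salient_vertexCone hP hv) ?_
  rintro _ ⟨y, hy, rfl⟩ hy0 hface
  obtain ⟨s, hs, hw, hext⟩ := exists_edge_of_isFaceOf hP hPc hv.1 hy0
    (by simpa only [add_sub_cancel] using hVP hy) (hgen ▸ hface)
  have hmem := hC _ hw (by simpa [hs.ne'] using hy0) hext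
  rw [add_sub_cancel_left] at hmem
  simpa only [inv_smul_smul₀ hs.ne'] using PointedCone.smul_mem _ (inv_nonneg.2 hs.le) hmem

end Edges

section LatticeLength

variable {𝕜 E : Type*} [Field 𝕜] [LinearOrder 𝕜] [IsStrictOrderedRing 𝕜] [FloorRing 𝕜]
  [AddCommGroup E] [Module 𝕜 E] {N : ℕ}

lemma exists_lt_mul_sub_le_one {Θ : Finset 𝕜} (hΘ : ↑Θ ⊆ Set.Icc (0 : 𝕜) 1) (hN : 1 ≤ N)
    (hcard : N < Θ.card) : ∃ θ ∈ Θ, ∃ η ∈ Θ, θ < η ∧ N * (η - θ) ≤ 1 := by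
  have hbin (θ : 𝕜) (hθ : θ ∈ Set.Icc (0 : 𝕜) 1) :
      ∃ k ∈ Finset.range N, (k : 𝕜) ≤ N * θ ∧ N * θ ≤ k + 1 := by
    have hNθ : N * θ ≤ N := mul_le_of_le_one_right N.cast_nonneg hθ.2
    have hceil : ⌈N * θ⌉₊ ≤ N := Nat.ceil_le.2 hNθ
    rcases Nat.eq_zero_or_pos ⌈N * θ⌉₊ with h | h
    · refine ⟨0, Finset.mem_range.2 hN, ?_, ?_⟩
      · simpa using mul_nonneg N.cast_nonneg hθ.1
      · simpa using (Nat.ceil_eq_zero.1 h).trans zero_le_one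
    · have hlt := Nat.ceil_lt_add_one (mul_nonneg N.cast_nonneg hθ.1)
      have hle := Nat.le_ceil (N * θ)
      refine ⟨⌈N * θ⌉₊ - 1, Finset.mem_range.2 (by omega), ?_, ?_⟩ <;>
        rw [Nat.cast_pred h] <;> linarith
  choose! k hk hk_le hle_k using hbin
  obtain ⟨θ, hθ, η, hη, hne, hkk⟩ := Finset.exists_ne_map_eq_of_card_lt_of_maps_to
    (f := k) (by rwa [Finset.card_range]) fun θ hθ ↦ hk θ (hΘ hθ)
  wlog hlt : θ < η generalizing θ η
  · exact this η hη θ hθ hne.symm hkk.symm (hne.lt_or_gt.resolve_left hlt)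
  refine ⟨θ, hθ, η, hη, hlt, ?_⟩
  have := hle_k η (hΘ hη)
  rw [← hkk] at this
  linarith [hk_le θ (hΘ hθ)]

lemma exists_smul_sub_mem_of_lt_card {L : AddSubgroup E} {v w : E} {S : Finset E} (hN : 1 ≤ N)
    (hcard : N < S.card) (hS : ∀ x ∈ S, x ∈ segment 𝕜 v w ∧ x ∈ L) :
    ∃ τ : 𝕜, 0 < τ ∧ N * τ ≤ 1 ∧ τ • (w - v) ∈ L := by
  classical
  obtain ⟨Θ, hΘ, rfl⟩ := Finset.subset_set_image_iff.1
    (show (S : Set E) ⊆ (fun θ : 𝕜 ↦ v + θ • (w - v)) '' Set.Icc 0 1 from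
      fun x hx ↦ segment_eq_image' 𝕜 v w ▸ (hS x hx).1)
  obtain ⟨θ, hθ, η, hη, hlt, hle⟩ :=
    exists_lt_mul_sub_le_one hΘ hN (hcard.trans_le Finset.card_image_le)
  refine ⟨η - θ, sub_pos.2 hlt, hle, ?_⟩
  have hmem := sub_mem (hS _ (Finset.mem_image_of_mem _ hη)).2
    (hS _ (Finset.mem_image_of_mem _ hθ)).2
  rwa [add_sub_add_left_eq_sub, ← sub_smul] at hmem

end LatticeLength

section VertexMonoid

variable {E : Type*} [AddCommGroup E]

/-- The monoid generated by `(L ∩ P) - v`, for a vertex `v ∈ L` of a polytope `P`. Very ampleness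
asks that it contain all points of `L` in the cone generated by `P - v`. -/
def vertexMonoid (L : AddSubgroup E) (P : Set E) (v : E) : AddSubmonoid E :=
  AddSubmonoid.closure (L ∩ {q | v + q ∈ P})

variable [TopologicalSpace E] [T2Space E] [IsTopologicalAddGroup E] (L : AddSubgroup E)
  [DiscreteTopology L]

lemma finite_inter_of_isCompact {K : Set E} (hK : IsCompact K) : ((L : Set E) ∩ K).Finite :=
  (hK.inter_left L.isClosed_of_discrete).finite
    (IsDiscrete.mono ⟨‹DiscreteTopology L›⟩ Set.inter_subset_left)

variable {L} [Module ℝ E] [ContinuousSMul ℝ E] {P : Set E} {v : E} {N : ℕ}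

theorem mem_vertexMonoid_of_mem_vertexCone {V : Finset E} (hPV : P = convexHull ℝ (V : Set E))
    (hN : 1 ≤ N) (hdim : Module.finrank ℝ (vectorSpan ℝ P) ≤ N + 1) (hv : v ∈ P.extremePoints ℝ)
    (hedge : ∀ w ∈ P.extremePoints ℝ, v ≠ w → IsExtreme ℝ P (segment ℝ v w) →
      ∃ τ : ℝ, 0 < τ ∧ N * τ ≤ 1 ∧ τ • (w - v) ∈ L)
    {x : E} (hxL : x ∈ L) (hx : x ∈ vertexCone ℝ P v) : x ∈ vertexMonoid L P v := by
  have hP : Convex ℝ P := hPV ▸ convex_convexHull ℝ _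
  have hPc : IsCompact P := hPV ▸ V.finite_toSet.isCompact_convexHull ℝ
  have hN0 : (0 : ℝ) < N := Nat.cast_pos.2 hN
  set A : Set E := {w | w ∈ L ∧ (N : ℝ) • w ∈ {q | v + q ∈ P}}
  have hfin : A.Finite := finite_inter_of_isCompact L
    (((Homeomorph.addLeft v).isClosedEmbedding.comp
      (Homeomorph.smulOfNeZero (N : ℝ) hN0.ne').isClosedEmbedding).isCompact_preimage hPc)
  have hspan : Submodule.span ℝ A ≤ vectorSpan ℝ P := Submodule.span_le.2 fun w hw ↦ by
    have hNw : v + (N : ℝ) • w ∈ P := hw.2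
    have := vsub_mem_vectorSpan ℝ hNw hv.1
    rw [vsub_eq_sub, add_sub_cancel_left] at this
    exact (Submodule.smul_mem_iff _ hN0.ne').1 this
  have hVfin : FiniteDimensional ℝ (vectorSpan ℝ P) := by
    rw [hPV, ← direction_affineSpan, affineSpan_convexHull, direction_affineSpan]
    exact finiteDimensional_vectorSpan_of_finite ℝ V.finite_toSet
  have hcone : vertexCone ℝ P v ≤ PointedCone.hull ℝ A := by
    refine vertexCone_le_of_forall_edge hPV hv fun w hw hvw hext ↦ ?_
    obtain ⟨τ, hτ, hNτ, hτL⟩ := hedge w hw hvw hext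
    have hmem : τ • (w - v) ∈ A := by
      refine ⟨hτL, ?_⟩
      rw [smul_smul]
      exact hP.add_smul_sub_mem hv.1 hw.1 ⟨mul_nonneg hN0.le hτ.le, hNτ⟩
    simpa only [inv_smul_smul₀ hτ.ne'] using
      PointedCone.smul_mem _ (inv_nonneg.2 hτ.le) (PointedCone.subset_hull hmem)
  exact mem_closure_of_mem_hull hN (hP.translate_preimage_right v)
    (by simpa using hv.1) hfin ((Submodule.finrank_mono hspan).trans hdim) hxL (hcone hx)

end VertexMonoid

section Remainder

variable {𝕜 E : Type*} [Field 𝕜] [LinearOrder 𝕜] [IsStrictOrderedRing 𝕜]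
  [AddCommGroup E] [Module 𝕜 E] {W : Finset E}

lemma mem_smul_convexHull_iff (hW : W.Nonempty) {r : 𝕜} (hr : 0 ≤ r) {x : E} :
    x ∈ r • convexHull 𝕜 (W : Set E) ↔
      ∃ c : E → 𝕜, (∀ w ∈ W, 0 ≤ c w) ∧ ∑ w ∈ W, c w = r ∧ ∑ w ∈ W, c w • w = x := by
  constructor
  · rintro ⟨p, hp, rfl⟩
    obtain ⟨u, hu0, hu1, rfl⟩ := Finset.mem_convexHull'.1 hp
    refine ⟨fun w ↦ r * u w, fun w hw ↦ mul_nonneg hr (hu0 w hw), ?_, ?_⟩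
    · rw [← Finset.mul_sum, hu1, mul_one]
    · simp only [mul_smul, Finset.smul_sum]
  · rintro ⟨c, hc, rfl, rfl⟩
    rcases hr.eq_or_lt with h0 | hpos
    · have hczero : ∑ w ∈ W, c w • w = 0 := Finset.sum_eq_zero fun w hw ↦ by
        rw [(Finset.sum_eq_zero_iff_of_nonneg hc).1 h0.symm w hw, zero_smul]
      rw [← h0, hczero, Set.zero_smul_set ((Finset.coe_nonempty.2 hW).convexHull)]
      exact Set.mem_zero.2 rfl
    · refine ⟨W.centerMass c id, W.centerMass_mem_convexHull hc hpos fun w hw ↦ hw, ?_⟩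
      exact smul_inv_smul₀ hpos.ne' _

lemma exists_remainder_of_mem_smul_convexHull [FloorSemiring 𝕜] (hW : W.Nonempty) {k : ℕ} {x : E}
    (hx : x ∈ (k : 𝕜) • convexHull 𝕜 (W : Set E)) :
    ∃ m : E → ℕ, ∃ j ≤ W.card, ∃ r ∈ (j : 𝕜) • convexHull 𝕜 (W : Set E),
      k = j + ∑ w ∈ W, m w ∧ x = r + ∑ w ∈ W, m w • w := by
  obtain ⟨c, hc, hck, rfl⟩ := (mem_smul_convexHull_iff hW k.cast_nonneg).1 hx
  have hfloor_sum : (↑(∑ w ∈ W, ⌊c w⌋₊) : 𝕜) = ∑ w ∈ W, (⌊c w⌋₊ : 𝕜) := Nat.cast_sum _ _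
  have hle : ∑ w ∈ W, ⌊c w⌋₊ ≤ k := by
    rw [← Nat.cast_le (α := 𝕜), ← hck, hfloor_sum]
    exact Finset.sum_le_sum fun w hw ↦ Nat.floor_le (hc w hw)
  obtain ⟨j, rfl⟩ := Nat.exists_eq_add_of_le' hle
  have hj : ∑ w ∈ W, (c w - ⌊c w⌋₊) = j := by
    rw [Finset.sum_sub_distrib, hck, ← hfloor_sum, Nat.cast_add, add_sub_cancel_right]
  refine ⟨fun w ↦ ⌊c w⌋₊, j, ?_, ∑ w ∈ W, (c w - ⌊c w⌋₊) • w,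
    (mem_smul_convexHull_iff hW j.cast_nonneg).2
      ⟨_, fun w hw ↦ sub_nonneg.2 (Nat.floor_le (hc w hw)), hj, rfl⟩, rfl, ?_⟩
  · rw [← Nat.cast_le (α := 𝕜), ← hj, ← nsmul_one]
    exact Finset.sum_le_card_nsmul _ _ _ fun w _ ↦
      sub_le_iff_le_add'.2 (Nat.lt_floor_add_one (c w)).le
  · simp only [sub_smul, Finset.sum_sub_distrib, Nat.cast_smul_eq_nsmul, sub_add_cancel]

end Remainder

section PolytopalMonoid

variable {E : Type*} [AddCommGroup E]

/-- The polytopal monoid of `P` with respect to `L`, generated by the points of `L ∩ P` placed at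
height `1`: it contains `(k, x)` if and only if `x` is a sum of `k` points of `L ∩ P`. -/
def polytopalMonoid (L : AddSubgroup E) (P : Set E) : AddSubmonoid (ℕ × E) :=
  AddSubmonoid.closure ({1} ×ˢ ((L : Set E) ∩ P))

variable {L : AddSubgroup E} {P : Set E}

lemma one_mem_polytopalMonoid {p : E} (hpL : p ∈ L) (hpP : p ∈ P) :
    (1, p) ∈ polytopalMonoid L P :=
  AddSubmonoid.subset_closure ⟨rfl, hpL, hpP⟩

lemma smul_mem_polytopalMonoid {p : E} (hpL : p ∈ L) (hpP : p ∈ P) (m : ℕ) :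
    (m, m • p) ∈ polytopalMonoid L P := by
  simpa using nsmul_mem (one_mem_polytopalMonoid hpL hpP) m

lemma exists_eq_sum_of_mem_polytopalMonoid {a : ℕ × E} (ha : a ∈ polytopalMonoid L P) :
    ∃ f : Fin a.1 → E, (∀ i, f i ∈ L ∧ f i ∈ P) ∧ a.2 = ∑ i, f i := by
  induction ha using AddSubmonoid.closure_induction with
  | mem a ha =>
    obtain ⟨k, p⟩ := a
    obtain ⟨rfl, hp⟩ := ha
    exact ⟨fun _ ↦ p, fun _ ↦ hp, (Fin.sum_univ_one fun _ ↦ p).symm⟩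
  | zero => exact ⟨Fin.elim0, fun i ↦ i.elim0, rfl⟩
  | add a b _ _ iha ihb =>
    obtain ⟨f, hf, hfa⟩ := iha
    obtain ⟨g, hg, hgb⟩ := ihb
    refine ⟨Fin.append f g, Fin.addCases (by simpa using hf) (by simpa using hg), ?_⟩
    simp [Fin.sum_univ_add, hfa, hgb]

lemma eventually_mem_polytopalMonoid_of_mem_vertexMonoid {v q : E} (hvL : v ∈ L) (hvP : v ∈ P)
    (hq : q ∈ vertexMonoid L P v) :
    ∀ᶠ m in Filter.atTop, (m, q + m • v) ∈ polytopalMonoid L P := by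
  suffices ∃ m, (m, q + m • v) ∈ polytopalMonoid L P by
    obtain ⟨m₀, hm₀⟩ := this
    filter_upwards [Filter.eventually_ge_atTop m₀] with m hm
    obtain ⟨l, rfl⟩ := Nat.exists_eq_add_of_le hm
    simpa [add_smul, add_assoc] using add_mem hm₀ (smul_mem_polytopalMonoid hvL hvP l)
  induction hq using AddSubmonoid.closure_induction with
  | mem q hq =>
    have hvq : v + q ∈ P := hq.2
    exact ⟨1, by simpa [add_comm] using one_mem_polytopalMonoid (add_mem hvL hq.1) hvq⟩
  | zero => exact ⟨0, by rw [zero_smul, add_zero]; exact zero_mem _⟩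
  | add q q' _ _ ih ih' =>
    obtain ⟨a, ha⟩ := ih
    obtain ⟨b, hb⟩ := ih'
    refine ⟨a + b, ?_⟩
    simpa [add_smul, add_add_add_comm] using add_mem ha hb

variable [TopologicalSpace E] [T2Space E] [IsTopologicalAddGroup E] [DiscreteTopology L]
  [Module ℝ E] [ContinuousSMul ℝ E] {W : Finset E}

lemma eventually_forall_remainder_mem_polytopalMonoid (hPW : P = convexHull ℝ (W : Set E))
    (hWL : ∀ v ∈ W, v ∈ L)
    (hgen : ∀ v ∈ W, ∀ x ∈ L, x ∈ vertexCone ℝ P v → x ∈ vertexMonoid L P v) (J : Finset ℕ) :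
    ∀ᶠ m : ℕ in Filter.atTop, ∀ v ∈ W, ∀ j ∈ J, ∀ r ∈ (L : Set E) ∩ (j : ℝ) • P,
      (m, r - j • v + m • v) ∈ polytopalMonoid L P := by
  have hWP : (W : Set E) ⊆ P := hPW ▸ subset_convexHull ℝ _
  have hPc : IsCompact P := hPW ▸ W.finite_toSet.isCompact_convexHull ℝ
  refine (Filter.eventually_all_finset W).2 fun v hv ↦ (Filter.eventually_all_finset J).2 fun j _ ↦
    (Filter.eventually_all_finite (finite_inter_of_isCompact L (hPc.smul _))).2 ?_
  rintro r ⟨hrL, p, hp, rfl⟩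
  refine eventually_mem_polytopalMonoid_of_mem_vertexMonoid (hWL v hv) (hWP hv)
    (hgen v hv _ (sub_mem hrL (nsmul_mem (hWL v hv) j)) ?_)
  rw [← Nat.cast_smul_eq_nsmul ℝ, ← smul_sub]
  exact PointedCone.smul_mem _ j.cast_nonneg (sub_mem_vertexCone hp)

theorem eventually_forall_mem_polytopalMonoid (hPW : P = convexHull ℝ (W : Set E))
    (hWL : ∀ v ∈ W, v ∈ L)
    (hgen : ∀ v ∈ W, ∀ x ∈ L, x ∈ vertexCone ℝ P v → x ∈ vertexMonoid L P v) :
    ∀ᶠ k : ℕ in Filter.atTop, ∀ x ∈ L, x ∈ (k : ℝ) • P → (k, x) ∈ polytopalMonoid L P := by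
  classical
  have hWP : (W : Set E) ⊆ P := hPW ▸ subset_convexHull ℝ _
  obtain ⟨M, hM⟩ := Filter.eventually_atTop.1 (eventually_forall_remainder_mem_polytopalMonoid
    hPW hWL hgen (Finset.range (W.card + 1)))
  filter_upwards [Filter.eventually_ge_atTop (W.card + W.card * M)] with k hk x hxL hx
  have hW : W.Nonempty := by
    rw [← Finset.coe_nonempty, ← convexHull_nonempty_iff (𝕜 := ℝ), ← hPW]
    exact Set.Nonempty.of_image ⟨x, hx⟩
  obtain ⟨m, j, hj, r, hr, rfl, rfl⟩ := exists_remainder_of_mem_smul_convexHull hW (hPW ▸ hx)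
  have hrL : r ∈ L :=
    (add_mem_cancel_right (sum_mem fun w hw ↦ nsmul_mem (hWL w hw) (m w))).1 hxL
  obtain ⟨v, hv, hMv⟩ : ∃ v ∈ W, M ≤ m v := by
    refine Finset.exists_le_of_sum_le hW ?_
    rw [Finset.sum_const, smul_eq_mul]
    omega
  have hrv := hM (j + m v) (hMv.trans le_add_self) v hv j (Finset.mem_range_succ_iff.2 hj) r
    ⟨hrL, hPW ▸ hr⟩
  have hrest : ∑ w ∈ W.erase v, (m w, m w • w) ∈ polytopalMonoid L P := sum_mem fun w hw ↦
    smul_mem_polytopalMonoid (hWL w (Finset.mem_of_mem_erase hw)) (hWP (Finset.mem_of_mem_erase hw))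
      (m w)
  convert add_mem hrv hrest using 1
  refine Prod.ext ?_ ?_
  · simp only [Prod.fst_add, Prod.fst_sum, add_assoc, Finset.add_sum_erase W m hv]
  · simp only [Prod.snd_add, Prod.snd_sum]
    rw [← Finset.add_sum_erase W (fun w ↦ m w • w) hv, add_smul]
    abel

end PolytopalMonoid

section Polytope

variable {E : Type*} [AddCommGroup E] [Module ℝ E] [TopologicalSpace E] [T2Space E]
  [IsTopologicalAddGroup E] [ContinuousSMul ℝ E] [LocallyConvexSpace ℝ E]

lemma convexHull_extremePoints_convexHull {V : Set E} (hV : V.Finite) :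
    convexHull ℝ ((convexHull ℝ V).extremePoints ℝ) = convexHull ℝ V := by
  have := closure_convexHull_extremePoints (hV.isCompact_convexHull ℝ) (convex_convexHull ℝ V)
  rwa [((hV.subset extremePoints_convexHull_subset).isClosed_convexHull ℝ).closure_eq] at this

theorem eventually_forall_mem_polytopalMonoid_of_lt_card_edge {L : AddSubgroup E}
    [DiscreteTopology L] {P : Set E} {V : Finset E} {N : ℕ} (hVL : ∀ x ∈ V, x ∈ L)
    (hPV : P = convexHull ℝ (V : Set E)) (hN : 1 ≤ N)
    (hdim : Module.finrank ℝ (vectorSpan ℝ P) ≤ N + 1)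
    (hedge : ∀ v ∈ P.extremePoints ℝ, ∀ w ∈ P.extremePoints ℝ, v ≠ w →
      IsExtreme ℝ P (segment ℝ v w) →
      ∃ S : Finset E, N < S.card ∧ ∀ x ∈ S, x ∈ segment ℝ v w ∧ x ∈ L) :
    ∀ᶠ k : ℕ in Filter.atTop, ∀ x ∈ L, x ∈ (k : ℝ) • P → (k, x) ∈ polytopalMonoid L P := by
  have hextV : P.extremePoints ℝ ⊆ V := hPV ▸ extremePoints_convexHull_subset
  have hfin : (P.extremePoints ℝ).Finite := V.finite_toSet.subset hextV
  refine eventually_forall_mem_polytopalMonoid (W := hfin.toFinset) ?_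
    (fun v hv ↦ hVL v (hextV (hfin.mem_toFinset.1 hv))) fun v hv x hxL hx ↦ ?_
  · rw [hfin.coe_toFinset, hPV, convexHull_extremePoints_convexHull V.finite_toSet]
  · have hv' := hfin.mem_toFinset.1 hv
    refine mem_vertexMonoid_of_mem_vertexCone hPV hN hdim hv' (fun w hw hvw hext ↦ ?_) hxL hx
    obtain ⟨S, hcard, hS⟩ := hedge v hv' w hw hvw hext
    exact exists_smul_sub_mem_of_lt_card hN hcard hS

end Polytope

section IntegerLattice

variable {n : ℕ}

/-- The lattice `ℤⁿ` in `ℝⁿ`, as the `ℤ`-span of the standard basis, which is known to be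
discrete. -/
def integerLattice (n : ℕ) : AddSubgroup (Fin n → ℝ) :=
  (Submodule.span ℤ (Set.range (Pi.basisFun ℝ (Fin n)))).toAddSubgroup

lemma mem_integerLattice {x : Fin n → ℝ} : x ∈ integerLattice n ↔ IsLatticePoint x := by
  rw [integerLattice, Submodule.mem_toAddSubgroup, Module.Basis.mem_span_iff_repr_mem]
  simp [IsLatticePoint, eq_comm]

instance : DiscreteTopology (integerLattice n) :=
  inferInstanceAs (DiscreteTopology (Submodule.span ℤ (Set.range (Pi.basisFun ℝ (Fin n)))))

-- Both endpoints of an edge of a lattice polytope are lattice points.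
lemma LPE.max_two {k : ℕ} {V P : Set (Fin n → ℝ)} (hV : ∀ x ∈ V, IsLatticePoint x)
    (hP : P = convexHull ℝ V) (hLPE : LPE k P) : LPE (max k 2) P := by
  classical
  rintro v w hedge
  have hext : P.extremePoints ℝ ⊆ V := hP ▸ extremePoints_convexHull_subset
  rcases le_total 2 k with hk | hk
  · rw [max_eq_left hk]
    exact hLPE v w hedge
  · refine ⟨{v, w}, by rw [max_eq_right hk, Finset.card_pair hedge.1], ?_⟩
    simp only [Finset.mem_insert, Finset.mem_singleton, forall_eq_or_imp, forall_eq]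
    exact ⟨⟨left_mem_segment ℝ v w, hV v (hext hedge.2.1)⟩,
      right_mem_segment ℝ v w, hV w (hext hedge.2.2.1)⟩

lemma isIDP_of_forall_mem_polytopalMonoid {P : Set (Fin n → ℝ)} {k : ℕ}
    (h : ∀ x ∈ integerLattice n, x ∈ (k : ℝ) • P → (k, x) ∈ polytopalMonoid (integerLattice n) P) :
    IsIDP k P := fun x hx hxL ↦ by
  obtain ⟨f, hf, hsum⟩ :=
    exists_eq_sum_of_mem_polytopalMonoid (h x (mem_integerLattice.2 hxL) hx)
  exact ⟨f, fun i ↦ ⟨(hf i).2, mem_integerLattice.1 (hf i).1⟩, hsum⟩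

end IntegerLattice

theorem stmt_0_general (n : ℕ) (V : Finset (Fin n → ℝ)) (hV : ∀ x ∈ V, IsLatticePoint x)
    (P : Set (Fin n → ℝ)) (hP : P = convexHull ℝ (V : Set (Fin n → ℝ)))
    (hLPE : LPE (Module.finrank ℝ (vectorSpan ℝ P)) P) : IsVeryAmple P := by
  set d := Module.finrank ℝ (vectorSpan ℝ P)
  obtain ⟨N, hN⟩ : ∃ N, max d 2 = N + 1 := Nat.exists_eq_add_one.2 (by omega)
  have hedge (v) (hv : v ∈ P.extremePoints ℝ) (w) (hw : w ∈ P.extremePoints ℝ) (hvw : v ≠ w)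
      (hext : IsExtreme ℝ P (segment ℝ v w)) : ∃ S : Finset (Fin n → ℝ), N < S.card ∧
        ∀ x ∈ S, x ∈ segment ℝ v w ∧ x ∈ integerLattice n := by
    simpa only [hN, mem_integerLattice, Nat.succ_le_iff] using
      hLPE.max_two hV hP v w ⟨hvw, hv, hw, hext⟩
  obtain ⟨k₀, hk₀⟩ := Filter.eventually_atTop.1 <|
    eventually_forall_mem_polytopalMonoid_of_lt_card_edge
      (fun x hx ↦ mem_integerLattice.2 (hV x hx)) hP (by omega) (by omega) hedge
  exact ⟨k₀, fun k hk ↦ isIDP_of_forall_mem_polytopalMonoid (hk₀ k hk)⟩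

/-- Payne. If a full-dimensional lattice polytope `P ⊂ ℝⁿ` has at
least `n` lattice points on every edge, then `P` is very ample. -/
theorem stmt_0 (n : ℕ) (V : Finset (Fin n → ℝ)) (hV : ∀ x ∈ V, IsLatticePoint x)
    (P : Set (Fin n → ℝ)) (hP : P = convexHull ℝ (V : Set (Fin n → ℝ)))
    (hspan : affineSpan ℝ P = ⊤) (hLPE : LPE n P) :
    IsVeryAmple P :=
  stmt_0_general n V hV P hP <| by
    rwa [← direction_affineSpan, hspan, AffineSubspace.direction_top, finrank_top,
      Module.finrank_fin_fun]
end

section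
/- Let Q ⊆ P ⊂ ℝⁿ be lattice polytopes, both having the origin 0 as a vertex (extreme point). Suppose that Q is normal and that there exists l ∈ ℕ with P ⊆ lQ. Then the additive submonoid of ℤⁿ generated by P ∩ ℤⁿ equals the additive submonoid generated by Q ∩ ℤⁿ. -/
theorem isIDP_zero {n : ℕ} (P : Set (Fin n → ℝ)) : IsIDP 0 P := by
  rintro _ ⟨y, -, rfl⟩ -
  exact ⟨Fin.elim0, fun i => i.elim0, by simp⟩

theorem IsNormal.isIDP {n : ℕ} {P : Set (Fin n → ℝ)} (hP : IsNormal P) (k : ℕ) : IsIDP k P := by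
  obtain rfl | hk := k.eq_zero_or_pos
  · exact isIDP_zero P
  · exact hP k hk

theorem IsIDP.mem_closure {n k : ℕ} {P : Set (Fin n → ℝ)} (hP : IsIDP k P) {x : Fin n → ℝ}
    (hxP : x ∈ dilate k P) (hx : IsLatticePoint x) :
    x ∈ AddSubmonoid.closure {y | y ∈ P ∧ IsLatticePoint y} := by
  obtain ⟨f, hf, rfl⟩ := hP x hxP hx
  exact sum_mem fun i _ => AddSubmonoid.subset_closure (hf i)

theorem stmt_1_general {n : ℕ} {P Q : Set (Fin n → ℝ)} (hQP : Q ⊆ P) (hQ : IsNormal Q)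
    (hPQ : P ⊆ ⋃ k, dilate k Q) :
    AddSubmonoid.closure {x | x ∈ P ∧ IsLatticePoint x} =
      AddSubmonoid.closure {x | x ∈ Q ∧ IsLatticePoint x} := by
  refine le_antisymm (AddSubmonoid.closure_le.2 ?_)
    (AddSubmonoid.closure_mono fun x hx => ⟨hQP hx.1, hx.2⟩)
  rintro x ⟨hxP, hx⟩
  obtain ⟨k, hxk⟩ := Set.mem_iUnion.1 (hPQ hxP)
  exact (hQ.isIDP k).mem_closure hxk hx

/-- If `Q ⊆ P` are lattice polytopes with `0` a vertex of both,
`Q` is normal and `P ⊆ lQ` for some `l ∈ ℕ`, then the additive submonoids generated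
by the lattice points of `P` and of `Q` coincide. -/
theorem stmt_1 (n : ℕ) (VP VQ : Finset (Fin n → ℝ))
    (hVP : ∀ x ∈ VP, IsLatticePoint x) (hVQ : ∀ x ∈ VQ, IsLatticePoint x)
    (P Q : Set (Fin n → ℝ))
    (hP : P = convexHull ℝ (VP : Set (Fin n → ℝ)))
    (hQ : Q = convexHull ℝ (VQ : Set (Fin n → ℝ)))
    (hQP : Q ⊆ P)
    (h0P : (0 : Fin n → ℝ) ∈ P.extremePoints ℝ)
    (h0Q : (0 : Fin n → ℝ) ∈ Q.extremePoints ℝ)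
    (hQnorm : IsNormal Q)
    (l : ℕ) (hl : P ⊆ dilate l Q) :
    AddSubmonoid.closure {x | x ∈ P ∧ IsLatticePoint x} =
      AddSubmonoid.closure {x | x ∈ Q ∧ IsLatticePoint x} :=
  stmt_1_general hQP hQnorm (Set.subset_iUnion_of_subset l hl)
end

section
/- Let b₀, …, bₙ be positive integers. Set Δ = conv(b₀e₀, …, bₙeₙ, bₙe_{n+1}) ⊂ ℝ^{n+2} and Δ̃ = conv(b₀e₀, …, bₙeₙ) ⊂ ℝ^{n+1}, where eᵢ denotes standard basis vectors. Then for every integer k ≥ 1, every lattice point of kΔ is a sum of k lattice points of Δ if and only if every lattice point of kΔ̃ is a sum of k lattice points of Δ̃. Consequently Δ is normal if and only if Δ̃ is normal, and Δ is very ample if and only if Δ̃ is very ample. -/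
/-!
Splitting the last coordinate of `x` as `xₙ = (xₙ - t) + t` with `0 ≤ t ≤ xₙ` turns `Δ̃` into `Δ`:
the linear map `(x, t) ↦ (x₀, …, xₙ₋₁, xₙ - t, t)` identifies the lattices and sends
`{(x, t) | x ∈ Δ̃, 0 ≤ t ≤ xₙ}` onto `Δ`. In these coordinates, a decomposition of a lattice
point `(x, 0)` of `kΔ` projects to one of `x`. Conversely, if `(x, m)` is a lattice point of `kΔ`
and `x = ∑ gᵢ` with lattice points `gᵢ` of `Δ̃`, the integer `m ∈ [0, ∑ (gᵢ)ₙ]` is a sum of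
integers `aᵢ ∈ [0, (gᵢ)ₙ]`, so that `(x, m) = ∑ (gᵢ, aᵢ)`.
-/

theorem exists_sum_eq_of_mem_Icc {ι α : Type*} [AddCommGroup α] [LinearOrder α]
    [IsOrderedAddMonoid α] (s : Finset ι) {u : ι → α} (hu : ∀ i ∈ s, 0 ≤ u i) {t : α}
    (ht : t ∈ Set.Icc 0 (∑ i ∈ s, u i)) :
    ∃ a : ι → α, (∀ i ∈ s, a i ∈ Set.Icc 0 (u i)) ∧ ∑ i ∈ s, a i = t := by
  classical
  induction s using Finset.induction_on generalizing t with
  | empty => exact ⟨0, by simp, by simpa [eq_comm] using ht⟩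
  | insert j s hj ih =>
    rw [Finset.forall_mem_insert] at hu
    rw [Finset.sum_insert hj, ← add_zero (0 : α),
      ← Set.Icc_add_Icc hu.1 (Finset.sum_nonneg hu.2)] at ht
    obtain ⟨p, hp, q, hq, rfl⟩ := ht
    obtain ⟨a, ha, hsum⟩ := ih hu.2 hq
    have hne : ∀ i ∈ s, i ≠ j := fun i hi => ne_of_mem_of_not_mem hi hj
    refine ⟨Function.update a j p, ?_, ?_⟩
    · rw [Finset.forall_mem_insert]
      exact ⟨by simpa using hp, fun i hi => by simpa [hne i hi] using ha i hi⟩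
    · rw [Finset.sum_insert hj, Finset.sum_update_of_notMem hj, Function.update_self, hsum]

/-- The region `{(x, t) | x ∈ s, 0 ≤ t ≤ f x}` between the zero function and `f` over `s`. Unlike
Mathlib's `regionBetween`, it contains both bounding graphs. -/
def underGraph {α β : Type*} [Zero β] [LE β] (f : α → β) (s : Set α) : Set (α × β) :=
  {p | p.1 ∈ s ∧ 0 ≤ p.2 ∧ p.2 ≤ f p.1}

section UnderGraph

variable {𝕜 E : Type*} [Field 𝕜] [LinearOrder 𝕜] [IsStrictOrderedRing 𝕜] [AddCommGroup E]
  [Module 𝕜 E]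

theorem convex_underGraph {f : E → 𝕜} {s : Set E} (hf : ConcaveOn 𝕜 s f) :
    Convex 𝕜 (underGraph f s) := by
  have h_eq : underGraph f s = {p | p.1 ∈ s ∧ p.2 ≤ f p.1} ∩ Prod.snd ⁻¹' Set.Ici 0 := by
    ext p
    simp only [underGraph, Set.mem_ofPred_eq, Set.mem_inter_iff, Set.mem_preimage, Set.mem_Ici]
    tauto
  rw [h_eq]
  exact hf.convex_hypograph.inter ((convex_Ici 0).linear_preimage (LinearMap.snd 𝕜 E 𝕜))

theorem nonneg_of_mem_convexHull (ℓ : E →ₗ[𝕜] 𝕜) {s : Set E} (hs : ∀ x ∈ s, 0 ≤ ℓ x) :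
    ∀ x ∈ convexHull 𝕜 s, 0 ≤ ℓ x :=
  convexHull_min hs ((convex_Ici 0).linear_preimage ℓ)

theorem underGraph_convexHull (ℓ : E →ₗ[𝕜] 𝕜) {s : Set E} (hs : ∀ x ∈ s, 0 ≤ ℓ x) :
    underGraph ℓ (convexHull 𝕜 s) =
      convexHull 𝕜 ((fun x => (x, 0)) '' s ∪ (fun x => (x, ℓ x)) '' s) := by
  apply Set.Subset.antisymm
  · rintro ⟨x, t⟩ ⟨hx, ht⟩
    have h_bottom : (x, 0) ∈ convexHull 𝕜 ((fun x => (x, (0 : 𝕜))) '' s) :=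
      (LinearMap.inl 𝕜 E 𝕜).image_convexHull s ▸ Set.mem_image_of_mem _ hx
    have h_top : (x, ℓ x) ∈ convexHull 𝕜 ((fun x => (x, ℓ x)) '' s) :=
      (LinearMap.id.prod ℓ).image_convexHull s ▸ Set.mem_image_of_mem _ hx
    have h_segment : (x, t) ∈ segment 𝕜 (x, 0) (x, ℓ x) := by
      rw [← Prod.image_mk_segment_right, segment_eq_Icc (ht.1.trans ht.2)]
      exact ⟨t, ht, rfl⟩
    exact (convex_convexHull 𝕜 _).segment_subset
      (convexHull_mono Set.subset_union_left h_bottom)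
      (convexHull_mono Set.subset_union_right h_top) h_segment
  · refine convexHull_min ?_ (convex_underGraph (ℓ.concaveOn (convex_convexHull 𝕜 s)))
    rintro _ (⟨x, hx, rfl⟩ | ⟨x, hx, rfl⟩)
    · exact ⟨subset_convexHull 𝕜 s hx, le_rfl, hs x hx⟩
    · exact ⟨subset_convexHull 𝕜 s hx, hs x hx, le_rfl⟩

end UnderGraph

/-- The linear map `(x, t) ↦ (x₀, …, xₙ₋₁, xₙ - t, t)`, which splits the last coordinate of `x`
into two summands. -/
def splitLast {n : ℕ} : (Fin (n + 1) → ℝ) × ℝ →ₗ[ℝ] (Fin (n + 2) → ℝ) where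
  toFun p := Fin.snoc (α := fun _ => ℝ) (p.1 - Pi.single (Fin.last n) p.2) p.2
  map_add' p q := by
    ext i
    refine Fin.lastCases ?_ (fun j => ?_) i
    · simp
    · simp [Pi.single_add, add_sub_add_comm]
  map_smul' r p := by
    ext i
    refine Fin.lastCases ?_ (fun j => ?_) i
    · simp
    · simp [mul_sub, Pi.single_apply]

/-- The set obtained from `P ⊆ ℝⁿ⁺¹` by splitting the last coordinate of each of its points into
two nonnegative summands in all possible ways. -/
def lastSplitting {n : ℕ} (P : Set (Fin (n + 1) → ℝ)) : Set (Fin (n + 2) → ℝ) :=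
  splitLast '' underGraph (fun x => x (Fin.last n)) P

section SplitLast

variable {n : ℕ}

theorem splitLast_castSucc (p : (Fin (n + 1) → ℝ) × ℝ) (j : Fin (n + 1)) :
    splitLast p j.castSucc = p.1 j - (Pi.single (Fin.last n) p.2 : Fin (n + 1) → ℝ) j := by
  simp [splitLast]

theorem splitLast_last (p : (Fin (n + 1) → ℝ) × ℝ) :
    splitLast p (Fin.last (n + 1)) = p.2 := by
  simp [splitLast]

theorem splitLast_injective : Function.Injective (splitLast (n := n)) := by
  rintro ⟨x, s⟩ ⟨y, t⟩ h
  obtain rfl : s = t := by simpa only [splitLast_last] using congrFun h (Fin.last (n + 1))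
  ext j
  · simpa [splitLast_castSucc] using congrFun h j.castSucc
  · rfl

theorem splitLast_single_zero (i : Fin (n + 1)) (a : ℝ) :
    splitLast (Pi.single i a, 0) = Pi.single i.castSucc a := by
  ext j
  refine Fin.lastCases ?_ (fun j => ?_) j
  · simp [splitLast_last]
  · simp [splitLast_castSucc, Pi.single_apply]

theorem splitLast_single_last_self (a : ℝ) :
    splitLast (Pi.single (Fin.last n) a, a) = Pi.single (Fin.last (n + 1)) a := by
  ext j
  refine Fin.lastCases ?_ (fun j => ?_) j
  · simp [splitLast_last]
  · simp [splitLast_castSucc]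

theorem isLatticePoint_splitLast_iff {x : Fin (n + 1) → ℝ} {t : ℝ} :
    IsLatticePoint (splitLast (x, t)) ↔ IsLatticePoint x ∧ ∃ m : ℤ, t = m := by
  simp only [IsLatticePoint, Fin.forall_fin_succ' (n := n + 1), splitLast_castSucc,
    splitLast_last]
  refine and_congr_left ?_
  rintro ⟨m, rfl⟩
  refine forall_congr' fun j => ?_
  by_cases hj : j = Fin.last n
  · subst hj
    simp only [Pi.single_eq_same, sub_eq_iff_eq_add]
    exact ⟨fun ⟨z, hz⟩ => ⟨z + m, by simpa using hz⟩, fun ⟨z, hz⟩ => ⟨z - m, by simpa using hz⟩⟩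
  · simp [hj]

theorem IsIDP.of_lastSplitting {P : Set (Fin (n + 1) → ℝ)} (hP : ∀ x ∈ P, 0 ≤ x (Fin.last n))
    {k : ℕ} (h : IsIDP k (lastSplitting P)) : IsIDP k P := by
  rintro _ ⟨p, hp, rfl⟩ hx
  have h_mem : splitLast ((k : ℝ) • p, 0) ∈ dilate k (lastSplitting P) :=
    ⟨splitLast (p, 0), ⟨(p, 0), ⟨hp, le_rfl, hP p hp⟩, rfl⟩, by simp [← map_smul]⟩
  have h_lattice : IsLatticePoint (splitLast ((k : ℝ) • p, 0)) :=
    isLatticePoint_splitLast_iff.2 ⟨hx, 0, by simp⟩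
  obtain ⟨f, hf, hsum⟩ := h _ h_mem h_lattice
  choose g hg hgf using fun i => (hf i).1
  refine ⟨fun i => (g i).1, fun i => ⟨(hg i).1, ?_⟩, ?_⟩
  · exact (isLatticePoint_splitLast_iff.1 (hgf i ▸ (hf i).2)).1
  · simp only [← hgf, ← map_sum] at hsum
    simpa [Prod.fst_sum] using congrArg Prod.fst (splitLast_injective hsum)

theorem IsIDP.lastSplitting {P : Set (Fin (n + 1) → ℝ)} (hP : ∀ x ∈ P, 0 ≤ x (Fin.last n))
    {k : ℕ} (h : IsIDP k P) : IsIDP k (lastSplitting P) := by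
  rintro _ ⟨_, ⟨⟨p, s⟩, ⟨hp, hs_nonneg, hs_le⟩, rfl⟩, rfl⟩ hx
  simp only [← map_smul, Prod.smul_mk] at hx ⊢
  obtain ⟨hkp, m, hm⟩ := isLatticePoint_splitLast_iff.1 hx
  obtain ⟨g, hg, hsum : (k : ℝ) • p = ∑ i, g i⟩ := h _ ⟨p, hp, rfl⟩ hkp
  choose u hu using fun i => (hg i).2 (Fin.last n)
  have hu_nonneg (i : Fin k) : 0 ≤ u i := by exact_mod_cast hu i ▸ hP _ (hg i).1
  have hm_nonneg : (0 : ℝ) ≤ m := hm ▸ by positivity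
  have hm_le : (m : ℝ) ≤ ∑ i, (u i : ℝ) := calc
    (m : ℝ) = k * s := hm.symm
    _ ≤ k * p (Fin.last n) := by gcongr
    _ = ∑ i, (u i : ℝ) := by simpa [hu] using congrFun hsum (Fin.last n)
  obtain ⟨a, ha, hasum⟩ := exists_sum_eq_of_mem_Icc Finset.univ (fun i _ => hu_nonneg i)
    (t := m) ⟨by exact_mod_cast hm_nonneg, by exact_mod_cast hm_le⟩
  have ha_nonneg (i : Fin k) : (0 : ℝ) ≤ a i := by exact_mod_cast (ha i (Finset.mem_univ i)).1
  have ha_le (i : Fin k) : (a i : ℝ) ≤ g i (Fin.last n) := by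
    rw [hu]
    exact_mod_cast (ha i (Finset.mem_univ i)).2
  refine ⟨fun i => splitLast (g i, a i), fun i => ⟨?_, ?_⟩, ?_⟩
  · exact ⟨_, ⟨(hg i).1, ha_nonneg i, ha_le i⟩, rfl⟩
  · exact isLatticePoint_splitLast_iff.2 ⟨(hg i).2, a i, rfl⟩
  · rw [← map_sum, hsum, hm, ← hasum, Int.cast_sum, prod_mk_sum]

theorem isIDP_lastSplitting_iff {P : Set (Fin (n + 1) → ℝ)} (hP : ∀ x ∈ P, 0 ≤ x (Fin.last n))
    (k : ℕ) : IsIDP k (lastSplitting P) ↔ IsIDP k P :=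
  ⟨.of_lastSplitting hP, .lastSplitting hP⟩

theorem lastSplitting_convexHull {S : Set (Fin (n + 1) → ℝ)} (hS : ∀ x ∈ S, 0 ≤ x (Fin.last n)) :
    lastSplitting (convexHull ℝ S) = convexHull ℝ
      ((fun x => splitLast (x, 0)) '' S ∪ (fun x => splitLast (x, x (Fin.last n))) '' S) := by
  calc splitLast '' underGraph (LinearMap.proj (R := ℝ) (Fin.last n)) (convexHull ℝ S)
    _ = splitLast '' convexHull ℝ
          ((fun x => (x, 0)) '' S ∪ (fun x => (x, x (Fin.last n))) '' S) := by
      rw [underGraph_convexHull _ hS]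
      rfl
    _ = _ := by rw [LinearMap.image_convexHull, Set.image_union, Set.image_image, Set.image_image]

theorem last_nonneg_of_mem_range_single {c : Fin (n + 1) → ℝ} (hc : 0 ≤ c (Fin.last n)) :
    ∀ x ∈ Set.range fun i => (Pi.single i (c i) : Fin (n + 1) → ℝ), 0 ≤ x (Fin.last n) := by
  rintro _ ⟨i, rfl⟩
  by_cases hi : i = Fin.last n
  · simpa [hi] using hc
  · simp [Ne.symm hi]

theorem lastSplitting_convexHull_range_single {c : Fin (n + 1) → ℝ} (hc : 0 ≤ c (Fin.last n)) :
    lastSplitting (convexHull ℝ (Set.range fun i => Pi.single i (c i))) =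
      convexHull ℝ ((Set.range fun i : Fin (n + 1) => Pi.single i.castSucc (c i)) ∪
        {Pi.single (Fin.last (n + 1)) (c (Fin.last n))}) := by
  rw [lastSplitting_convexHull (last_nonneg_of_mem_range_single hc)]
  congr 1
  apply Set.Subset.antisymm
  · rintro _ (⟨_, ⟨i, rfl⟩, rfl⟩ | ⟨_, ⟨i, rfl⟩, rfl⟩)
    · exact .inl ⟨i, (splitLast_single_zero i (c i)).symm⟩
    · by_cases hi : i = Fin.last n
      · right
        simp [hi, splitLast_single_last_self]
      · left
        exact ⟨i, by simp [Ne.symm hi, splitLast_single_zero]⟩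
  · rintro _ (⟨i, rfl⟩ | rfl)
    · exact .inl ⟨_, ⟨i, rfl⟩, splitLast_single_zero i (c i)⟩
    · exact .inr ⟨_, ⟨Fin.last n, rfl⟩, by simp [splitLast_single_last_self]⟩

end SplitLast

theorem stmt_2_general (n : ℕ) (c : Fin (n + 1) → ℝ) (hc : 0 ≤ c (Fin.last n)) :
    (∀ k : ℕ,
      (IsIDP k (convexHull ℝ
          ((Set.range fun i : Fin (n + 1) => Pi.single i.castSucc (c i)) ∪
            {Pi.single (Fin.last (n + 1)) (c (Fin.last n))})) ↔
        IsIDP k (convexHull ℝ (Set.range fun i : Fin (n + 1) => Pi.single i (c i))))) ∧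
    (IsNormal (convexHull ℝ
        ((Set.range fun i : Fin (n + 1) => Pi.single i.castSucc (c i)) ∪
          {Pi.single (Fin.last (n + 1)) (c (Fin.last n))})) ↔
      IsNormal (convexHull ℝ (Set.range fun i : Fin (n + 1) => Pi.single i (c i)))) ∧
    (IsVeryAmple (convexHull ℝ
        ((Set.range fun i : Fin (n + 1) => Pi.single i.castSucc (c i)) ∪
          {Pi.single (Fin.last (n + 1)) (c (Fin.last n))})) ↔
      IsVeryAmple (convexHull ℝ (Set.range fun i : Fin (n + 1) => Pi.single i (c i)))) := by
  rw [← lastSplitting_convexHull_range_single hc]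
  have h_nonneg := nonneg_of_mem_convexHull (LinearMap.proj (R := ℝ) (φ := fun _ => ℝ) (Fin.last n))
    (last_nonneg_of_mem_range_single hc)
  have h_idp := isIDP_lastSplitting_iff h_nonneg
  exact ⟨h_idp, forall₂_congr fun k _ => h_idp k,
    exists_congr fun _ => forall₂_congr fun k _ => h_idp k⟩

/-- repeated weights. For positive integers `b₀, …, bₙ`, let
`Δ = conv(b₀e₀, …, bₙeₙ, bₙe_{n+1}) ⊂ ℝ^{n+2}` and
`Δ' = conv(b₀e₀, …, bₙeₙ) ⊂ ℝ^{n+1}`. Then for every `k ≥ 1`, `kΔ` satisfies the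
IDP property iff `kΔ'` does; consequently `Δ` is normal iff `Δ'` is normal, and
`Δ` is very ample iff `Δ'` is very ample. -/
theorem stmt_2 (n : ℕ) (b : Fin (n + 1) → ℕ) (hb : ∀ i, 0 < b i) :
    (∀ k : ℕ, 1 ≤ k →
      (IsIDP k (convexHull ℝ
          ((Set.range fun i : Fin (n + 1) => Pi.single i.castSucc ((b i : ℝ))) ∪
            {Pi.single (Fin.last (n + 1)) ((b (Fin.last n) : ℝ))})) ↔
        IsIDP k (convexHull ℝ
          (Set.range fun i : Fin (n + 1) => Pi.single i ((b i : ℝ)))))) ∧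
    (IsNormal (convexHull ℝ
        ((Set.range fun i : Fin (n + 1) => Pi.single i.castSucc ((b i : ℝ))) ∪
          {Pi.single (Fin.last (n + 1)) ((b (Fin.last n) : ℝ))})) ↔
      IsNormal (convexHull ℝ
        (Set.range fun i : Fin (n + 1) => Pi.single i ((b i : ℝ))))) ∧
    (IsVeryAmple (convexHull ℝ
        ((Set.range fun i : Fin (n + 1) => Pi.single i.castSucc ((b i : ℝ))) ∪
          {Pi.single (Fin.last (n + 1)) ((b (Fin.last n) : ℝ))})) ↔
      IsVeryAmple (convexHull ℝ
        (Set.range fun i : Fin (n + 1) => Pi.single i ((b i : ℝ))))) := by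
  have h := stmt_2_general n (fun i => b i) (Nat.cast_nonneg _)
  exact ⟨fun k _ => h.1 k, h.2⟩
end

section
/- Let a₀, …, aₙ be positive integers such that gcd(aᵢ, aⱼ) = 1 whenever aᵢ ≠ aⱼ. Then the associated simplex Δ_{a,l} ⊂ ℝ^{n+1} is very ample. (Equivalently, every ample line bundle on the weighted projective space ℙ(a₀, …, aₙ) is very ample, i.e. μ_VA(ℙ(a₀,…,aₙ)) = 1.) -/
/-!
A nonnegative integer point of `kΔ_{a,l}` is a multiset of `∑ xᵢ` items, item `i` weighing `aᵢ`,
of total weight `k l`; it is a sum of `k` lattice points of `Δ_{a,l}` if and only if these items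
can be distributed into `k` bins, each filled to weight exactly `l`.

If `k` is large, some item `i` contributes a large share of the weight. For every `j ≠ i` put
copies of `j` alone into bins, `l / aⱼ` at a time, so that a bounded number of items other than
`i` is left. Unless one of them has weight `aᵢ`, the pigeonhole principle for partial sums modulo
`aᵢ` yields a nonempty part of at most `aᵢ` of them whose weight is a multiple of `aᵢ`. This part
weighs at most `aᵢ max aⱼ ≤ l`, as `aᵢ aⱼ ∣ l` for coprime weights; so it fits into one bin, and
copies of `i` fill that bin exactly.
-/

section ZeroSum

variable {ι : Type*}

theorem exists_le_card_le_sum_map_eq_zero {G : Type*} [AddCommGroup G] [Fintype G] (f : ι → G)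
    {s : Multiset ι} (hs : Fintype.card G ≤ s.card) :
    ∃ t ≤ s, t ≠ 0 ∧ t.card ≤ Fintype.card G ∧ (t.map f).sum = 0 := by
  induction s using Quotient.inductionOn with | _ L
  let prefixSum (i : Fin (Fintype.card G + 1)) : G := ((L.take i).map f).sum
  obtain ⟨i, j, hij, hsum⟩ : ∃ i j, i < j ∧ prefixSum i = prefixSum j := by
    obtain ⟨i, j, hne, h⟩ := Fintype.exists_ne_map_eq_of_card_lt prefixSum (by simp)
    exact hne.lt_or_gt.elim (fun hij ↦ ⟨i, j, hij, h⟩) fun hji ↦ ⟨j, i, hji, h.symm⟩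
  have hjL : (j : ℕ) ≤ L.length := (Nat.le_of_lt_succ j.isLt).trans hs
  have hsplit : L.take j = L.take i ++ (L.take j).drop i := by
    conv_lhs => rw [← List.take_append_drop i (L.take j), List.take_take,
      min_eq_left (Fin.le_def.1 hij.le)]
  have hlen : ((L.take j).drop i).length = j - i := by simp [hjL]
  refine ⟨(L.take j).drop i, ?_, ?_, ?_, ?_⟩
  · exact ((List.drop_sublist ..).trans (List.take_sublist ..)).subperm
  · rw [← Multiset.card_pos, Multiset.coe_card, hlen]
    exact Nat.sub_pos_of_lt hij
  · rw [Multiset.coe_card, hlen]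
    omega
  · have hadd : prefixSum j = prefixSum i + (((L.take j).drop i).map f).sum := by
      rw [← List.sum_append, ← List.map_append, ← hsplit]
    simpa [hsum] using hadd

end ZeroSum

section Packing

variable {ι : Type*} {a : ι → ℕ} {l : ℕ}

/-- The total weight of a multiset of items, where each item `i` weighs `a i`. -/
def weight (a : ι → ℕ) : Multiset ι →+ ℕ :=
  Multiset.sumAddMonoidHom.comp (Multiset.mapAddMonoidHom a)

theorem weight_apply (s : Multiset ι) : weight a s = (s.map a).sum := rfl

theorem weight_replicate (n : ℕ) (i : ι) : weight a (Multiset.replicate n i) = n * a i := by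
  simp [weight_apply]

theorem weight_replicate_div {i : ι} (hil : a i ∣ l) :
    weight a (Multiset.replicate (l / a i) i) = l := by
  rw [weight_replicate, Nat.div_mul_cancel hil]

theorem weight_eq_sum_count [Fintype ι] [DecidableEq ι] (s : Multiset ι) :
    weight a s = ∑ i, a i * s.count i := by
  rw [weight_apply, Finset.sum_multiset_map_count]
  refine (Finset.sum_subset (Finset.subset_univ _) fun i _ hi ↦ ?_).trans ?_
  · simp [Multiset.count_eq_zero.2 (Multiset.mem_toFinset.not.1 hi)]
  · simp [mul_comm]

theorem mul_weight_le_card_mul {d : ℕ} {s : Multiset ι} (h : ∀ i ∈ s, d * a i ≤ l) :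
    d * weight a s ≤ s.card * l := by
  rw [weight_apply, ← Multiset.sum_map_mul_left]
  simpa using (s.map fun i ↦ d * a i).sum_le_card_nsmul l (by simpa using h)

theorem weight_le_card_mul {s : Multiset ι} (h : ∀ i ∈ s, a i ≤ l) : weight a s ≤ s.card * l := by
  simpa using mul_weight_le_card_mul (d := 1) (by simpa using h)

theorem exists_le_card_le_dvd_weight {d : ℕ} (hd : 0 < d) {s : Multiset ι} (hs : s ≠ 0)
    (hds : d ∣ weight a s) : ∃ t ≤ s, t ≠ 0 ∧ t.card ≤ d ∧ d ∣ weight a t := by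
  obtain hcard | hcard := le_total s.card d
  · exact ⟨s, le_rfl, hs, hcard, hds⟩
  · have : NeZero d := ⟨hd.ne'⟩
    obtain ⟨t, hts, ht, htd, hsum⟩ :=
      exists_le_card_le_sum_map_eq_zero (fun i ↦ (a i : ZMod d)) (s := s) (by simpa using hcard)
    refine ⟨t, hts, ht, by simpa using htd, (ZMod.natCast_eq_zero_iff _ _).1 ?_⟩
    simpa [weight_apply, Nat.cast_multiset_sum] using hsum

theorem exists_le_dvd_weight_le {d : ℕ} (hd : 0 < d) (hdl : d ≤ l) {s : Multiset ι}
    (ha : ∀ i ∈ s, a i = d ∨ d * a i ≤ l) (hs : s ≠ 0) (hds : d ∣ weight a s) :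
    ∃ t ≤ s, t ≠ 0 ∧ d ∣ weight a t ∧ weight a t ≤ l := by
  by_cases! hex : ∃ i ∈ s, a i = d
  · obtain ⟨i, his, rfl⟩ := hex
    exact ⟨{i}, Multiset.singleton_le.2 his, by simp, by simp [weight_apply],
      by simpa [weight_apply] using hdl⟩
  · obtain ⟨t, hts, ht, htd, hdt⟩ := exists_le_card_le_dvd_weight hd hs hds
    refine ⟨t, hts, ht, hdt, Nat.le_of_mul_le_mul_left ?_ hd⟩
    calc d * weight a t ≤ t.card * l := mul_weight_le_card_mul fun i hi ↦
          (ha i (Multiset.mem_of_le hts hi)).resolve_left (hex i (Multiset.mem_of_le hts hi))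
      _ ≤ d * l := Nat.mul_le_mul_right l htd

theorem exists_eq_add_dvd_weight_le {d : ℕ} (hd : 0 < d) (hdl : d ≤ l) {s : Multiset ι}
    (ha : ∀ i ∈ s, a i = d ∨ d * a i ≤ l) (hds : d ∣ weight a s) {k : ℕ} (hsk : s.card ≤ k + 1) :
    ∃ t u, s = t + u ∧ u.card ≤ k ∧ d ∣ weight a t ∧ weight a t ≤ l := by
  by_cases hs : s = 0
  · exact ⟨0, 0, by simp [hs]⟩
  · obtain ⟨t, hts, ht, hdt, htl⟩ := exists_le_dvd_weight_le hd hdl ha hs hds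
    obtain ⟨u, rfl⟩ := Multiset.le_iff_exists_add.1 hts
    have htpos := Multiset.card_pos.2 ht
    rw [Multiset.card_add] at hsk
    exact ⟨t, u, rfl, by omega, hdt, htl⟩

/-- The multisets of items, with weights `a`, that can be distributed into bins each of which is
filled to a total weight of exactly `l`. -/
def packable (a : ι → ℕ) (l : ℕ) : AddSubmonoid (Multiset ι) :=
  AddSubmonoid.closure {s | weight a s = l}

theorem mem_packable_of_weight_eq {s : Multiset ι} (hs : weight a s = l) : s ∈ packable a l :=
  AddSubmonoid.subset_closure hs

theorem exists_sum_eq_of_mem_packable (hl : 0 < l) {k : ℕ} {s : Multiset ι}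
    (hs : s ∈ packable a l) (hw : weight a s = k * l) :
    ∃ t : Fin k → Multiset ι, (∀ i, weight a (t i) = l) ∧ ∑ i, t i = s := by
  obtain ⟨L, hL, rfl⟩ := AddSubmonoid.exists_list_of_mem_closure hs
  have hweight : weight a L.sum = L.length * l := by
    rw [map_list_sum, List.sum_eq_card_nsmul _ l (by simpa using hL)]
    simp
  obtain rfl : L.length = k := Nat.eq_of_mul_eq_mul_right hl (hweight.symm.trans hw)
  exact ⟨L.get, fun i ↦ hL _ (L.get_mem i), by simp [Fin.sum_univ_getElem]⟩

/- As long as `s` is not used up, each bin receives a nonempty part of it whose weight is a multiple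
of `a i`, topped up with copies of `i`. These suffice: the remaining part `u` of `s` never has more
items than there are bins left, so it weighs no more than these bins hold. -/
theorem add_replicate_mem_packable (hl : 0 < l) {i : ι} (hi : 0 < a i) (hil : a i ∣ l) {k N : ℕ}
    {s : Multiset ι} (ha : ∀ j ∈ s, a j = a i ∨ a i * a j ≤ l) (hsk : s.card ≤ k)
    (hw : weight a s + N * a i = k * l) : s + Multiset.replicate N i ∈ packable a l := by
  have hile : a i ≤ l := Nat.le_of_dvd hl hil
  induction k generalizing s N with
  | zero =>
    obtain rfl : s = 0 := by simpa using hsk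
    obtain rfl : N = 0 := by simpa [hi.ne'] using hw
    simp
  | succ k ih =>
    have hds : a i ∣ weight a s :=
      (Nat.dvd_add_left (Dvd.intro_left N rfl)).1 (hw ▸ hil.mul_left _)
    obtain ⟨t, u, rfl, hu, hdt, htl⟩ := exists_eq_add_dvd_weight_le hi hile ha hds hsk
    have hau : ∀ j ∈ u, a j = a i ∨ a i * a j ≤ l := fun j hj ↦ ha j (Multiset.mem_add.2 (.inr hj))
    obtain ⟨c, hc⟩ : ∃ c, weight a t + c * a i = l := by
      obtain ⟨c, hc⟩ := Nat.dvd_sub hil hdt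
      exact ⟨c, by rw [mul_comm c, ← hc, Nat.add_sub_cancel' htl]⟩
    have hule : weight a u ≤ k * l := by
      have hsmall : ∀ j ∈ u, a j ≤ l := fun j hj ↦
        (hau j hj).elim (· ▸ hile) ((Nat.le_mul_of_pos_left _ hi).trans ·)
      exact (weight_le_card_mul hsmall).trans (Nat.mul_le_mul_right l hu)
    rw [map_add, add_one_mul] at hw
    obtain ⟨M, rfl⟩ : ∃ M, N = c + M :=
      Nat.exists_eq_add_of_le (Nat.le_of_mul_le_mul_right (by omega) hi)
    rw [add_mul] at hw
    have hrec : u + Multiset.replicate M i ∈ packable a l := ih hau hu (by omega)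
    rw [Multiset.replicate_add, add_add_add_comm]
    exact add_mem (mem_packable_of_weight_eq (by rw [map_add, weight_replicate, hc])) hrec

variable [Fintype ι]

theorem mem_packable_of_count_le [DecidableEq ι] (hl : 0 < l) {i : ι} (hi : 0 < a i)
    (hil : a i ∣ l) (ha : ∀ j, a j ≠ a i → a i * a j ≤ l) {c : ι → ℕ} {k : ℕ} {s : Multiset ι}
    (hw : weight a s = k * l) (hcount : ∀ j ≠ i, s.count j ≤ c j)
    (hci : (∑ j, c j) * l ≤ a i * s.count i) : s ∈ packable a l := by
  have hsplit : s = s.filter (· ≠ i) + Multiset.replicate (s.count i) i := by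
    rw [add_comm, ← Multiset.filter_eq', Multiset.filter_add_not]
  have hcard : (s.filter (· ≠ i)).card ≤ ∑ j, c j := by
    rw [← Multiset.sum_count_eq_card fun j _ ↦ Finset.mem_univ j]
    refine Finset.sum_le_sum fun j _ ↦ ?_
    rw [Multiset.count_filter]
    split_ifs with hj
    exacts [hcount j hj, Nat.zero_le _]
  have hw' : weight a (s.filter (· ≠ i)) + s.count i * a i = k * l := by
    rw [← hw, ← weight_replicate, ← map_add, ← hsplit]
  have hk : ∑ j, c j ≤ k := by
    refine Nat.le_of_mul_le_mul_right ?_ hl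
    rw [mul_comm (a i)] at hci
    omega
  rw [hsplit]
  exact add_replicate_mem_packable hl hi hil (fun j _ ↦ or_iff_not_imp_left.2 (ha j))
    (hcard.trans hk) hw'

theorem mem_packable_of_le_mul_count [DecidableEq ι] (hl : 0 < l) (hdvd : ∀ i, a i ∣ l) {i : ι}
    (ha : ∀ j, a j ≠ a i → a i * a j ≤ l) {k : ℕ} {s : Multiset ι} (hw : weight a s = k * l)
    (hi : (∑ j, l / a j) * l ≤ a i * s.count i) : s ∈ packable a l := by
  induction k generalizing s with
  | zero =>
    have ha0 (j : ι) : a j ≠ 0 := (Nat.pos_of_dvd_of_pos (hdvd j) hl).ne'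
    obtain rfl : s = 0 := by
      simpa [weight_apply, Multiset.sum_eq_zero_iff, ha0, Multiset.eq_zero_iff_forall_notMem]
        using hw
    exact zero_mem _
  | succ k ih =>
    by_cases! hfull : ∃ j ≠ i, l / a j ≤ s.count j
    · obtain ⟨j, hji, hj⟩ := hfull
      obtain ⟨u, rfl⟩ :=
        Multiset.le_iff_exists_add.1 (Multiset.le_count_iff_replicate_le.1 hj)
      rw [map_add, weight_replicate_div (hdvd j), add_one_mul, add_comm, add_left_inj] at hw
      rw [Multiset.count_add, Multiset.count_replicate, if_neg hji, zero_add] at hi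
      exact add_mem (mem_packable_of_weight_eq (weight_replicate_div (hdvd j))) (ih hw hi)
    · exact mem_packable_of_count_le hl (Nat.pos_of_dvd_of_pos (hdvd i) hl) (hdvd i) ha hw
        (fun j hji ↦ (hfull j hji).le) hi

theorem mem_packable_of_card_mul_le (hl : 0 < l) (hdvd : ∀ i, a i ∣ l)
    (ha : ∀ i j, a i ≠ a j → a i * a j ≤ l) {k : ℕ}
    (hk : Fintype.card ι * ∑ i, l / a i ≤ k) {s : Multiset ι} (hw : weight a s = k * l) :
    s ∈ packable a l := by
  classical
  obtain _ | _ := isEmpty_or_nonempty ι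
  · exact Subsingleton.elim 0 s ▸ zero_mem _
  obtain ⟨i, -, hi⟩ : ∃ i ∈ Finset.univ, (∑ j, l / a j) * l ≤ a i * s.count i := by
    refine Finset.exists_le_of_sum_le Finset.univ_nonempty ?_
    calc ∑ _ : ι, (∑ j, l / a j) * l = (Fintype.card ι * ∑ j, l / a j) * l := by simp [mul_assoc]
      _ ≤ k * l := Nat.mul_le_mul_right l hk
      _ = ∑ i, a i * s.count i := by rw [← hw, weight_eq_sum_count]
  exact mem_packable_of_le_mul_count hl hdvd (fun j hj ↦ ha i j hj.symm) hw hi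

end Packing

section Simplex

/-- The simplex `Δ_{a,l}`: the convex hull of the points `(l / aᵢ) eᵢ`. The divisions take place
in `ℕ`, so this is the intended simplex only if every `aᵢ` divides `l`. -/
def associatedSimplex {ι : Type*} [DecidableEq ι] (a : ι → ℕ) (l : ℕ) : Set (ι → ℝ) :=
  convexHull ℝ (Set.range fun i ↦ Pi.single i ((l / a i : ℕ) : ℝ))

/-- The lattice point of `ι → ℝ` whose coordinates are the multiplicities of a multiset. -/
def countVector {ι : Type*} [DecidableEq ι] : Multiset ι →+ (ι → ℝ) where
  toFun s i := s.count i
  map_zero' := by ext; simp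
  map_add' s t := by ext; simp

variable {ι : Type*} [DecidableEq ι] {a : ι → ℕ} {l : ℕ}

theorem associatedSimplex_eq [Fintype ι] (hl : 0 < l) (hdvd : ∀ i, a i ∣ l) :
    associatedSimplex a l = {y | (∀ i, 0 ≤ y i) ∧ ∑ i, (a i : ℝ) * y i = l} := by
  have hlR : (l : ℝ) ≠ 0 := by positivity
  have hscale (i : ι) : (a i : ℝ) * (l / a i : ℕ) = l := by
    rw [← Nat.cast_mul, Nat.mul_div_cancel' (hdvd i)]
  let scale : (ι → ℝ) →ₗ[ℝ] (ι → ℝ) :=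
    LinearMap.pi fun i ↦ ((l / a i : ℕ) : ℝ) • LinearMap.proj i
  have himage : associatedSimplex a l = scale '' stdSimplex ℝ ι := by
    rw [← convexHull_rangle_single_eq_stdSimplex, LinearMap.image_convexHull, ← Set.range_comp,
      associatedSimplex]
    congr! 3 with i
    ext j
    obtain rfl | hji := eq_or_ne j i <;> simp [scale, *]
  rw [himage]
  ext y
  constructor
  · rintro ⟨w, ⟨hw0, hw1⟩, rfl⟩
    refine ⟨fun i ↦ mul_nonneg (Nat.cast_nonneg _) (hw0 i), ?_⟩
    simp [scale, ← mul_assoc, hscale, ← Finset.mul_sum, hw1]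
  · rintro ⟨hy0, hy1⟩
    refine ⟨fun i ↦ a i * y i / l, ⟨fun i ↦ ?_, ?_⟩, ?_⟩
    · have := hy0 i
      positivity
    · rw [← Finset.sum_div, hy1, div_self hlR]
    · ext i
      simp only [scale, LinearMap.pi_apply, LinearMap.smul_apply, LinearMap.proj_apply,
        smul_eq_mul]
      rw [← mul_div_assoc, div_eq_iff hlR, ← hscale i]
      ring

theorem countVector_mem_associatedSimplex [Finite ι] (hl : 0 < l) (hdvd : ∀ i, a i ∣ l)
    {s : Multiset ι} (hs : weight a s = l) : countVector s ∈ associatedSimplex a l := by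
  cases nonempty_fintype ι
  rw [associatedSimplex_eq hl hdvd]
  refine ⟨fun i ↦ Nat.cast_nonneg _, ?_⟩
  rw [← hs, weight_eq_sum_count]
  simp [countVector]

end Simplex

section VeryAmple

variable {n : ℕ}

theorem isLatticePoint_countVector (s : Multiset (Fin n)) : IsLatticePoint (countVector s) :=
  fun i ↦ ⟨s.count i, rfl⟩

theorem exists_countVector_eq {x : Fin n → ℝ} (hx : IsLatticePoint x) (hx0 : ∀ i, 0 ≤ x i) :
    ∃ s : Multiset (Fin n), countVector s = x := by
  choose z hz using hx
  refine ⟨∑ i, Multiset.replicate (z i).toNat i, funext fun i ↦ ?_⟩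
  have hzi : 0 ≤ z i := by exact_mod_cast hz i ▸ hx0 i
  have hcast : ((z i).toNat : ℝ) = z i := by exact_mod_cast Int.toNat_of_nonneg hzi
  simp [countVector, Multiset.count_replicate, hz, hcast]

theorem exists_countVector_eq_of_mem_dilate {a : Fin n → ℕ} {l : ℕ} (hl : 0 < l)
    (hdvd : ∀ i, a i ∣ l) {k : ℕ} {x : Fin n → ℝ} (hx : x ∈ dilate k (associatedSimplex a l))
    (hlat : IsLatticePoint x) :
    ∃ s, countVector s = x ∧ weight a s = k * l := by
  rw [associatedSimplex_eq hl hdvd] at hx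
  obtain ⟨y, ⟨hy0, hy1⟩, rfl⟩ := hx
  obtain ⟨s, hs⟩ := exists_countVector_eq hlat fun i ↦ mul_nonneg k.cast_nonneg (hy0 i)
  refine ⟨s, hs, ?_⟩
  have hcount (i : Fin n) : (s.count i : ℝ) = k * y i := congrFun hs i
  have hreal : (weight a s : ℝ) = k * l := by
    simp [weight_eq_sum_count, hcount, ← hy1, Finset.mul_sum, mul_left_comm]
  exact_mod_cast hreal

theorem stmt_3_general (n : ℕ) (a : Fin n → ℕ) (l : ℕ) (hl : 0 < l) (hdvd : ∀ i, a i ∣ l)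
    (ha : ∀ i j, a i ≠ a j → a i * a j ≤ l) : IsVeryAmple (associatedSimplex a l) := by
  refine ⟨Fintype.card (Fin n) * ∑ i, l / a i, fun k hk x hx hlat ↦ ?_⟩
  obtain ⟨s, rfl, hw⟩ := exists_countVector_eq_of_mem_dilate hl hdvd hx hlat
  obtain ⟨t, ht, rfl⟩ :=
    exists_sum_eq_of_mem_packable hl (mem_packable_of_card_mul_le hl hdvd ha hk hw) hw
  exact ⟨fun i ↦ countVector (t i), fun i ↦
    ⟨countVector_mem_associatedSimplex hl hdvd (ht i), isLatticePoint_countVector (t i)⟩,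
    map_sum countVector t Finset.univ⟩

end VeryAmple

/-- If any two distinct weights `aᵢ ≠ aⱼ` are coprime, then with
`l = lcm(a₀, …, aₙ)` the simplex `Δ_{a,l} = conv((l/a₀)e₀, …, (l/aₙ)eₙ) ⊂ ℝ^{n+1}`
is very ample. -/
theorem stmt_3 (n : ℕ) (a : Fin (n + 1) → ℕ) (ha : ∀ i, 0 < a i)
    (hcop : ∀ i j, a i ≠ a j → Nat.gcd (a i) (a j) = 1) :
    IsVeryAmple (convexHull ℝ
      (Set.range fun i : Fin (n + 1) =>
        Pi.single i ((Finset.univ.lcm a / a i : ℕ) : ℝ))) := by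
  have hdvd (i : Fin (n + 1)) : a i ∣ Finset.univ.lcm a := Finset.dvd_lcm (Finset.mem_univ i)
  have hl : 0 < Finset.univ.lcm a :=
    Nat.pos_of_ne_zero fun h ↦ by
      obtain ⟨i, -, hi⟩ := Finset.lcm_eq_zero_iff.1 h
      exact (ha i).ne' hi
  exact stmt_3_general (n + 1) a _ hl hdvd fun i j hij ↦
    Nat.le_of_dvd hl <| Nat.Coprime.mul_dvd_of_dvd_of_dvd (hcop i j hij) (hdvd i) (hdvd j)
end

section
/- Let a₀, …, aₙ be positive integers taking at most 3 distinct values (i.e. the set {a₀, …, aₙ} has at most 3 elements). Then the associated simplex Δ_{a,l} ⊂ ℝ^{n+1} is normal. (Equivalently, any weighted projective space with no more than 3 distinct weights has very ample index 1, and every embedding in a complete linear system is projectively normal.) -/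
/-!
A lattice point of `k Δ_{a,l}` is a vector `x` of natural numbers with `∑ aᵢ xᵢ = k l`, so
normality says that from such an `x` with `k ≥ 1` one can always split off some `y ≤ x` with
`∑ aᵢ yᵢ = l`. Adding up the coordinates of equal weight reduces this to distinct weights, hence
to at most three of them. A prime dividing all weights but possibly one can be cancelled, as in
the reduction of a weighted projective space to a well-formed one, so the weights may be assumed
pairwise coprime.

If some `aᵢ xᵢ ≥ l`, a multiple of the `i`-th unit vector can be split off. Otherwise
`k l < 3 l`, and only `k = 2` with three weights is left. Then the complement `z = l / a - x` also
has degree `l`, and it works when `z ≤ x`. If `zᵢ > xᵢ`, then the two other weights carry degree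
at least `3 l / 2`; grouping each of them into blocks of degree `l / aᵢ` yields `aᵢ` blocks when
`aᵢ ≥ 2`, and when `aᵢ = 1` a greedy choice leaves a remainder that `xᵢ` can fill.
-/

open Finset

section Splitting

variable {ι : Type*} [Fintype ι] {w x : ι → ℕ} {l : ℕ}

/-- Every monomial (with exponent vector `x`) whose degree with respect to the weights `w` is a
positive multiple of `l` is divisible by a monomial of degree exactly `l`. This is the
combinatorial content of normality of the simplex with weights `w` and degree `l`. -/
def SplitsInDegree (w : ι → ℕ) (l : ℕ) : Prop :=
  ∀ (k : ℕ) (x : ι → ℕ), w ⬝ᵥ x = (k + 1) * l → ∃ y ≤ x, w ⬝ᵥ y = l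

theorem add_single_one_le {α : Type*} [DecidableEq α] {x y : α → ℕ} {i : α} (hyx : y ≤ x)
    (hi : y i < x i) : y + Pi.single i 1 ≤ x := by
  intro j
  by_cases hj : j = i
  · subst hj; simpa using hi
  · simpa [hj] using hyx j

theorem exists_le_sum_eq {α : Type*} {s : Finset α} {x : α → ℕ} {m : ℕ}
    (h : m ≤ ∑ i ∈ s, x i) :
    ∃ y ≤ x, (∀ i ∉ s, y i = 0) ∧ ∑ i ∈ s, y i = m := by
  classical
  induction m with
  | zero => exact ⟨0, fun _ => Nat.zero_le _, by simp, by simp⟩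
  | succ m ih =>
    obtain ⟨y, hyx, hys, rfl⟩ := ih (by lia)
    obtain ⟨i, his, hi⟩ := exists_lt_of_sum_lt (Nat.lt_of_succ_le h)
    refine ⟨y + Pi.single i 1, add_single_one_le hyx hi, fun j hj => ?_, ?_⟩
    · have hji : j ≠ i := fun h => hj (h ▸ his)
      simp [hys j hj, hji]
    · simp [sum_add_distrib, sum_pi_single', his]

theorem exists_le_dotProduct_eq_of_le {i : ι} (hi : w i ∣ l) (h : l ≤ w i * x i) :
    ∃ y ≤ x, w ⬝ᵥ y = l := by
  classical
  refine ⟨Pi.single i (l / w i), ?_, by rw [dotProduct_single, Nat.mul_div_cancel' hi]⟩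
  exact update_le_iff.2 ⟨Nat.div_le_of_le_mul h, fun j _ => Nat.zero_le _⟩

theorem exists_le_dotProduct_le_and_forall_lt (w x : ι → ℕ) (l : ℕ) :
    ∃ y ≤ x, w ⬝ᵥ y ≤ l ∧ ∀ i, y i < x i → l < w ⬝ᵥ y + w i := by
  classical
  obtain ⟨y, ⟨hyx, hyl⟩, hmax⟩ :=
    ((Set.finite_Iic x).subset (Set.sep_subset _ fun y => w ⬝ᵥ y ≤ l)).exists_maximal
      ⟨0, by simp⟩
  refine ⟨y, hyx, hyl, fun i hi => ?_⟩
  by_contra! hle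
  have hstep := hmax ⟨add_single_one_le hyx hi, by simpa [dotProduct_add] using hle⟩ (by simp)
  simpa using hstep i

-- Take as much as possible of the other coordinates without exceeding `l`; what is then missing
-- is at most `x i₀` and is filled up with the weight `1`.
theorem exists_le_dotProduct_eq_of_weight_one {i₀ : ι} (h_one : w i₀ = 1)
    (hle : ∀ i ≠ i₀, w i ≤ x i₀ + 1) (hl : l ≤ w ⬝ᵥ x) : ∃ y ≤ x, w ⬝ᵥ y = l := by
  classical
  let x' := Function.update x i₀ 0
  have hxx' : x = x' + Pi.single i₀ (x i₀) := by
    ext i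
    by_cases hi : i = i₀
    · subst hi; simp [x']
    · simp [x', hi]
  obtain ⟨y, hyx', hyl, hmax⟩ := exists_le_dotProduct_le_and_forall_lt w x' l
  have hmissing : l - w ⬝ᵥ y ≤ x i₀ := by
    obtain rfl | hlt := eq_or_lt_of_le hyx'
    · rw [hxx', dotProduct_add, dotProduct_single, h_one] at hl
      lia
    · obtain ⟨-, i, hi⟩ := Pi.lt_def.1 hlt
      have hi₀ : i ≠ i₀ := by
        rintro rfl
        simp [x'] at hi
      have := hmax i hi
      have := hle i hi₀
      lia
  refine ⟨y + Pi.single i₀ (l - w ⬝ᵥ y), ?_, ?_⟩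
  · rw [hxx']
    exact add_le_add hyx' (Pi.single_le_single.2 hmissing)
  · rw [dotProduct_add, dotProduct_single, h_one]
    lia

-- Cut each `w i * x i` into blocks of size `m`: the remainders lose less than `m` per index.
theorem exists_le_dotProduct_eq_mul {s : Finset ι} {m t : ℕ} (hs : s.Nonempty) (hm : 0 < m)
    (hw : ∀ i ∈ s, w i ∣ m) (h : (t + #s) * m ≤ ∑ i ∈ s, w i * x i + m) :
    ∃ y ≤ x, w ⬝ᵥ y = t * m := by
  have hblocks : t ≤ ∑ i ∈ s, w i * x i / m := by
    have hlt : ∑ i ∈ s, w i * x i < (∑ i ∈ s, w i * x i / m + #s) * m :=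
      calc ∑ i ∈ s, w i * x i < ∑ i ∈ s, (w i * x i / m + 1) * m :=
            sum_lt_sum_of_nonempty hs fun i _ => by
              rw [mul_comm _ m]; exact Nat.lt_mul_div_succ _ hm
        _ = (∑ i ∈ s, w i * x i / m + #s) * m := by
            rw [← sum_mul, sum_add_distrib, sum_const, smul_eq_mul, mul_one]
    have : (t + #s) * m < (∑ i ∈ s, w i * x i / m + #s + 1) * m := by linarith
    have := lt_of_mul_lt_mul_right this hm.le
    lia
  obtain ⟨q, hq, hqs, hqt⟩ := exists_le_sum_eq hblocks
  have hwq (i : ι) : w i * (q i * (m / w i)) = q i * m := by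
    by_cases hi : i ∈ s
    · rw [mul_left_comm, Nat.mul_div_cancel' (hw i hi)]
    · simp [hqs i hi]
  refine ⟨fun i => q i * (m / w i), fun i => ?_, ?_⟩
  · by_cases hi : i ∈ s
    · refine Nat.le_of_mul_le_mul_left ?_ (Nat.pos_of_dvd_of_pos (hw i hi) hm)
      rw [hwq]
      exact (Nat.le_div_iff_mul_le hm).1 (hq i)
    · simp [hqs i hi]
  · simp only [dotProduct, hwq, ← sum_mul]
    rw [← sum_subset (subset_univ s) fun i _ hi => hqs i hi, hqt]

theorem mul_add_mul_div_sub {a b c : ℕ} (hac : a ∣ c) (h : a * b ≤ c) :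
    a * b + a * (c / a - b) = c := by
  rw [Nat.mul_sub, Nat.mul_div_cancel' hac, Nat.add_sub_cancel' h]

theorem dotProduct_div_sub (hwl : ∀ i, w i ∣ l) (hle : ∀ i, w i * x i ≤ l)
    (hx : w ⬝ᵥ x + l = Fintype.card ι * l) : w ⬝ᵥ (fun i => l / w i - x i) = l := by
  have : w ⬝ᵥ x + w ⬝ᵥ (fun i => l / w i - x i) = Fintype.card ι * l := by
    simp only [dotProduct, ← sum_add_distrib, mul_add_mul_div_sub (hwl _) (hle _), sum_const,
      card_univ, smul_eq_mul]
  lia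

theorem exists_le_dotProduct_eq_of_weight_one_of_forall_lt {i₀ : ι} (h_one : w i₀ = 1)
    (hwl : ∀ i, w i ∣ l) (hlt : ∀ i, w i * x i < l) (hx : w ⬝ᵥ x + l = Fintype.card ι * l)
    (hl : l ≤ w ⬝ᵥ x) : ∃ y ≤ x, w ⬝ᵥ y = l := by
  refine exists_le_dotProduct_eq_of_weight_one h_one (fun j hj => ?_) hl
  let z : ι → ℕ := fun i => l / w i - x i
  have hwz (i : ι) : w i * x i + w i * z i = l := mul_add_mul_div_sub (hwl i) (hlt i).le
  have hz : w ⬝ᵥ z = l := dotProduct_div_sub hwl (fun i => (hlt i).le) hx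
  have hwj : w j ≤ w j * z j := by
    refine Nat.le_mul_of_pos_right _ (Nat.pos_of_ne_zero fun h => ?_)
    simpa [h, (hlt j).ne] using hwz j
  have hzz : w j * z j + w i₀ * z i₀ ≤ w ⬝ᵥ z :=
    add_le_sum (f := fun i => w i * z i) (fun _ _ => Nat.zero_le _) (mem_univ j) (mem_univ i₀) hj
  have := hwz i₀
  rw [h_one] at this hzz
  lia

-- The other two weights divide `m = l / w i₀`, and their share of the degree is at least
-- `3 l / 2 ≥ (w i₀ + 1) m`, which is enough for `w i₀` blocks of size `m`.
theorem exists_le_dotProduct_eq_of_two_mul_le (hι : Fintype.card ι = 3)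
    (hco : Pairwise (Function.onFun Nat.Coprime w)) (hwl : ∀ i, w i ∣ l) (hl : 0 < l)
    (hx : w ⬝ᵥ x = 2 * l) {i₀ : ι} (h_two : 2 ≤ w i₀) (hsmall : 2 * (w i₀ * x i₀) ≤ l) :
    ∃ y ≤ x, w ⬝ᵥ y = l := by
  classical
  obtain ⟨m, rfl⟩ := hwl i₀
  have hm : 0 < m := Nat.pos_of_mul_pos_left hl
  have hdvd : ∀ j ∈ univ.erase i₀, w j ∣ m := fun j hj =>
    (hco (ne_of_mem_erase hj)).dvd_of_dvd_mul_left (hwl j)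
  have hcard : #(univ.erase i₀) = 2 := by rw [card_erase_of_mem (mem_univ _), card_univ, hι]
  have hne : (univ.erase i₀).Nonempty := card_pos.1 (by lia)
  have hsum : w i₀ * x i₀ + ∑ i ∈ univ.erase i₀, w i * x i = 2 * (w i₀ * m) := by
    rw [add_sum_erase _ (fun i => w i * x i) (mem_univ i₀), ← hx, dotProduct]
  have : 2 * m ≤ w i₀ * m := Nat.mul_le_mul_right m h_two
  refine exists_le_dotProduct_eq_mul hne hm hdvd ?_
  rw [hcard, add_mul]
  lia

theorem exists_le_dotProduct_eq_of_card_eq_three (hι : Fintype.card ι = 3)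
    (hco : Pairwise (Function.onFun Nat.Coprime w)) (hwl : ∀ i, w i ∣ l)
    (hlt : ∀ i, w i * x i < l) (hx : w ⬝ᵥ x = 2 * l) : ∃ y ≤ x, w ⬝ᵥ y = l := by
  have hx' : w ⬝ᵥ x + l = Fintype.card ι * l := by rw [hx, hι]; lia
  let z : ι → ℕ := fun i => l / w i - x i
  by_cases hzx : z ≤ x
  · exact ⟨z, hzx, dotProduct_div_sub hwl (fun i => (hlt i).le) hx'⟩
  obtain ⟨i₀, hi₀⟩ : ∃ i₀, x i₀ < z i₀ := by simpa [Pi.le_def] using hzx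
  have hl : 0 < l := (Nat.zero_le _).trans_lt (hlt i₀)
  have hw₀ : 0 < w i₀ := Nat.pos_of_dvd_of_pos (hwl i₀) hl
  obtain h_one | h_two : w i₀ = 1 ∨ 2 ≤ w i₀ := by lia
  · exact exists_le_dotProduct_eq_of_weight_one_of_forall_lt h_one hwl hlt hx' (by lia)
  · refine exists_le_dotProduct_eq_of_two_mul_le hι hco hwl hl hx h_two ?_
    have : w i₀ * x i₀ + w i₀ * z i₀ = l := mul_add_mul_div_sub (hwl i₀) (hlt i₀).le
    have := Nat.mul_le_mul_left (w i₀) hi₀.le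
    lia

theorem exists_forall_ne_imp_eq_or_eq (hι : Fintype.card ι ≤ 3) {i j : ι} (hij : i ≠ j) :
    ∃ i₀, ∀ k ≠ i₀, k = i ∨ k = j := by
  classical
  by_contra! h
  obtain ⟨k, -, hki, hkj⟩ := h i
  obtain ⟨k', hk'k, hk'i, hk'j⟩ := h k
  have hcard : #{i, j, k, k'} = 4 := by
    simp [card_insert_of_notMem, hij, hki.symm, hkj.symm, hk'k.symm, hk'i.symm, hk'j.symm]
  have := card_le_univ {i, j, k, k'}
  lia

namespace SplitsInDegree

theorem of_pairwise_coprime (hι : Fintype.card ι ≤ 3)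
    (hco : Pairwise (Function.onFun Nat.Coprime w)) (hwl : ∀ i, w i ∣ l) :
    SplitsInDegree w l := by
  intro k x hx
  by_cases! hlt : ∃ i, l ≤ w i * x i
  · obtain ⟨i, hi⟩ := hlt
    exact exists_le_dotProduct_eq_of_le (hwl i) hi
  obtain rfl | hk := Nat.eq_zero_or_pos k
  · exact ⟨x, le_rfl, by simpa using hx⟩
  cases isEmpty_or_nonempty ι
  · exact ⟨0, fun _ => Nat.zero_le _, by simp_all⟩
  have hsum : (k + 1) * l < Fintype.card ι * l := by
    rw [← hx, ← smul_eq_mul, ← card_univ, ← sum_const]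
    exact sum_lt_sum_of_nonempty univ_nonempty fun i _ => hlt i
  have := lt_of_mul_lt_mul_right hsum (Nat.zero_le l)
  obtain rfl : k = 1 := by lia
  exact exists_le_dotProduct_eq_of_card_eq_three (by lia) hco hwl hlt hx

theorem smul (h : SplitsInDegree w l) {p : ℕ} (hp : p ≠ 0) : SplitsInDegree (p • w) (p * l) := by
  intro k x hx
  have hx' : w ⬝ᵥ x = (k + 1) * l := by
    refine Nat.eq_of_mul_eq_mul_left (Nat.pos_of_ne_zero hp) ?_
    rw [← smul_eq_mul p, ← smul_dotProduct, hx, mul_left_comm]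
  obtain ⟨y, hyx, hy⟩ := h k x hx'
  exact ⟨y, hyx, by rw [smul_dotProduct, hy, smul_eq_mul]⟩

-- Any vector whose degree is a multiple of `p` has its `i₀`-th coordinate divisible by `p`.
theorem update_smul [DecidableEq ι] (h : SplitsInDegree w l) {p : ℕ} {i₀ : ι} (hp : p ≠ 0)
    (hco : p.Coprime (w i₀)) :
    SplitsInDegree (Function.update (p • w) i₀ (w i₀)) (p * l) := by
  have hdeg (v : ι → ℕ) (t : ℕ) :
      Function.update (p • w) i₀ (w i₀) ⬝ᵥ Function.update v i₀ (p * t) =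
        p * (w ⬝ᵥ Function.update v i₀ t) := by
    simp only [dotProduct, mul_sum]
    refine sum_congr rfl fun i _ => ?_
    by_cases hi : i = i₀
    · subst hi; simp; ring
    · simp [hi]; ring
  intro k x hx
  obtain ⟨t, ht⟩ : p ∣ x i₀ := by
    have hrest : p ∣ ∑ i ∈ univ.erase i₀, Function.update (p • w) i₀ (w i₀) i * x i :=
      dvd_sum fun i hi => by simp [ne_of_mem_erase hi, mul_assoc]
    rw [dotProduct, ← add_sum_erase _ _ (mem_univ i₀), Function.update_self] at hx
    refine hco.dvd_of_dvd_mul_left ((Nat.dvd_add_left hrest).1 ?_)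
    exact hx ▸ (dvd_mul_right p l).mul_left _
  have hxt : x = Function.update x i₀ (p * t) := by rw [← ht, Function.update_eq_self]
  rw [hxt, hdeg, mul_left_comm] at hx
  obtain ⟨y, hyx, hy⟩ := h k _ (Nat.eq_of_mul_eq_mul_left (Nat.pos_of_ne_zero hp) hx)
  refine ⟨Function.update y i₀ (p * y i₀), ?_, by rw [hdeg, Function.update_eq_self, hy]⟩
  rw [hxt]
  have := hyx i₀
  rw [Function.update_self] at this
  exact update_le_update_iff.2 ⟨Nat.mul_le_mul_left p this,
    fun i hi => by simpa [hi] using hyx i⟩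

theorem of_prime_dvd {p : ℕ} {i₀ : ι} (hp : p.Prime) (hpw : ∀ i ≠ i₀, p ∣ w i)
    (hwl : ∀ i, w i ∣ p * l)
    (h : ∀ w' : ι → ℕ, (∀ i, w' i ∣ l) → SplitsInDegree w' l) : SplitsInDegree w (p * l) := by
  classical
  by_cases hp₀ : p ∣ w i₀
  · have hpw' : ∀ i, p ∣ w i := fun i => by
      by_cases hi : i = i₀
      exacts [hi ▸ hp₀, hpw i hi]
    choose w' hw' using hpw'
    obtain rfl : w = p • w' := funext hw'
    exact (h w' fun i => Nat.dvd_of_mul_dvd_mul_left hp.pos (hwl i)).smul hp.ne_zero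
  · have hco : p.Coprime (w i₀) := hp.coprime_iff_not_dvd.2 hp₀
    choose! w' hw' using hpw
    let v := Function.update w' i₀ (w i₀)
    have hv : w = Function.update (p • v) i₀ (v i₀) := by
      ext i
      by_cases hi : i = i₀
      · subst hi; simp [v]
      · simp [v, hi, hw' i hi]
    have hvl : ∀ i, v i ∣ l := fun i => by
      by_cases hi : i = i₀
      · subst hi; simpa [v] using hco.symm.dvd_of_dvd_mul_left (hwl i)
      · refine Nat.dvd_of_mul_dvd_mul_left hp.pos ?_
        simpa [v, hi, ← hw' i hi] using hwl i
    rw [hv]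
    exact (h v hvl).update_smul hp.ne_zero (by simpa [v] using hco)

theorem of_card_le_three (hι : Fintype.card ι ≤ 3) (hwl : ∀ i, w i ∣ l) :
    SplitsInDegree w l := by
  obtain rfl | hl := Nat.eq_zero_or_pos l
  · exact fun _ x _ => ⟨0, fun _ => Nat.zero_le _, by simp⟩
  induction l using Nat.strong_induction_on generalizing w with
  | h l ih =>
    by_cases hco : Pairwise (Function.onFun Nat.Coprime w)
    · exact of_pairwise_coprime hι hco hwl
    obtain ⟨i, j, hij, hnot⟩ : ∃ i j, i ≠ j ∧ ¬ (w i).Coprime (w j) := by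
      simpa [Pairwise, Function.onFun] using hco
    obtain ⟨p, hp, hpi, hpj⟩ := Nat.Prime.not_coprime_iff_dvd.1 hnot
    obtain ⟨i₀, hi₀⟩ := exists_forall_ne_imp_eq_or_eq hι hij
    obtain ⟨l, rfl⟩ := hpi.trans (hwl i)
    have hl' : 0 < l := Nat.pos_of_mul_pos_left hl
    refine of_prime_dvd (i₀ := i₀) hp (fun k hk => ?_) hwl
      fun w' hw' => ih l (lt_mul_left hl' hp.one_lt) hw' hl'
    rcases hi₀ k hk with rfl | rfl <;> assumption

theorem comp {κ : Type*} [Fintype κ] {w : κ → ℕ} (h : SplitsInDegree w l) (c : ι → κ) :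
    SplitsInDegree (w ∘ c) l := by
  classical
  have hdeg (v : ι → ℕ) : (w ∘ c) ⬝ᵥ v = w ⬝ᵥ fun j => ∑ i with c i = j, v i := by
    simp only [dotProduct, mul_sum]
    rw [← sum_fiberwise univ c]
    refine sum_congr rfl fun j _ => sum_congr rfl fun i hi => ?_
    rw [Function.comp_apply, (mem_filter.1 hi).2]
  intro k x hx
  obtain ⟨Y, hYx, hY⟩ := h k _ (hdeg x ▸ hx)
  choose y hyx _ hyY using fun j => exists_le_sum_eq (hYx j)
  refine ⟨fun i => y (c i) i, fun i => hyx (c i) i, ?_⟩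
  rw [hdeg, ← hY]
  congr 1 with j
  rw [← hyY j]
  exact sum_congr rfl fun i hi => by rw [(mem_filter.1 hi).2]

theorem exists_eq_sum (h : SplitsInDegree w l) (k : ℕ) (x : ι → ℕ) (hx : w ⬝ᵥ x = (k + 1) * l) :
    ∃ f : Fin (k + 1) → ι → ℕ, (∀ j, w ⬝ᵥ f j = l) ∧ x = ∑ j, f j := by
  induction k generalizing x with
  | zero => exact ⟨fun _ => x, fun _ => by simpa using hx, by simp⟩
  | succ k ih =>
    obtain ⟨y, hyx, hy⟩ := h (k + 1) x hx
    obtain ⟨z, rfl⟩ := exists_add_of_le hyx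
    rw [dotProduct_add, hy] at hx
    obtain ⟨f, hf, rfl⟩ := ih z (by lia)
    exact ⟨Fin.cons y f, Fin.cases hy hf, by simp [Fin.sum_univ_succ]⟩

end SplitsInDegree

end Splitting

theorem mem_convexHull_range_single_iff {ι R : Type*} [Fintype ι] [DecidableEq ι] [Field R]
    [LinearOrder R] [IsStrictOrderedRing R] {v : ι → R} (hv : ∀ i, 0 < v i) {y : ι → R} :
    y ∈ convexHull R (Set.range fun i => Pi.single i (v i)) ↔
      (∀ i, 0 ≤ y i) ∧ ∑ i, y i / v i = 1 := by
  have hrange : (Set.range fun i => (Pi.single i (v i) : ι → R)) =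
      LinearMap.mulLeft R v '' Set.range fun i => Pi.single i 1 := by
    rw [← Set.range_comp]
    congr 1 with i : 1
    ext j
    by_cases hj : j = i
    · subst hj; simp
    · simp [hj]
  rw [hrange, ← LinearMap.image_convexHull, convexHull_rangle_single_eq_stdSimplex]
  constructor
  · rintro ⟨u, ⟨hu, husum⟩, rfl⟩
    refine ⟨fun i => mul_nonneg (hv i).le (hu i), ?_⟩
    simpa [mul_div_cancel_left₀ _ (hv _).ne'] using husum
  · rintro ⟨hy, hysum⟩
    refine ⟨y / v, ⟨fun i => div_nonneg (hy i) (hv i).le, hysum⟩, ?_⟩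
    ext i
    simp [mul_div_cancel₀ _ (hv i).ne']

section WeightedSimplex

variable {n : ℕ} {a : Fin n → ℕ} {l : ℕ}

/-- The simplex `Δ_{a,l}` of weights `a` and degree `l`, for `l` a positive common multiple of
the weights; for other `l` the divisions `l / a i` are truncated and it has no meaning. -/
def weightedSimplex (a : Fin n → ℕ) (l : ℕ) : Set (Fin n → ℝ) :=
  convexHull ℝ (Set.range fun i => Pi.single i ((l / a i : ℕ) : ℝ))

theorem mem_weightedSimplex_iff (hl : l ≠ 0) (hal : ∀ i, a i ∣ l) {y : Fin n → ℝ} :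
    y ∈ weightedSimplex a l ↔ (∀ i, 0 ≤ y i) ∧ ∑ i, a i * y i = l := by
  have hl₀ : (l : ℝ) ≠ 0 := Nat.cast_ne_zero.2 hl
  have ha₀ (i : Fin n) : (a i : ℝ) ≠ 0 := Nat.cast_ne_zero.2 (ne_zero_of_dvd_ne_zero hl (hal i))
  have hpos (i : Fin n) : (0 : ℝ) < (l / a i : ℕ) :=
    Nat.cast_pos.2 (Nat.div_pos (Nat.le_of_dvd (Nat.pos_of_ne_zero hl) (hal i))
      (Nat.pos_of_ne_zero (ne_zero_of_dvd_ne_zero hl (hal i))))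
  have hterm (i : Fin n) : y i / (l / a i : ℕ) = a i * y i / l := by
    rw [Nat.cast_div (hal i) (ha₀ i)]
    field_simp
  rw [weightedSimplex, mem_convexHull_range_single_iff hpos]
  simp only [hterm, ← sum_div, div_eq_one_iff_eq hl₀]

theorem natCast_mem_weightedSimplex_iff (hl : l ≠ 0) (hal : ∀ i, a i ∣ l) {y : Fin n → ℕ} :
    (fun i => (y i : ℝ)) ∈ weightedSimplex a l ↔ a ⬝ᵥ y = l := by
  rw [mem_weightedSimplex_iff hl hal, dotProduct, ← Nat.cast_inj (R := ℝ)]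
  simp

theorem exists_natCast_eq_of_mem_dilate (hl : l ≠ 0) (hal : ∀ i, a i ∣ l) {k : ℕ}
    {x : Fin n → ℝ} (hx : x ∈ dilate k (weightedSimplex a l)) (hx_int : IsLatticePoint x) :
    ∃ y : Fin n → ℕ, (x = fun i => (y i : ℝ)) ∧ a ⬝ᵥ y = k * l := by
  obtain ⟨u, hu, rfl⟩ := hx
  obtain ⟨hu_nonneg, hu_sum⟩ := (mem_weightedSimplex_iff hl hal).1 hu
  choose z hz using hx_int
  have hz_nonneg (i : Fin n) : 0 ≤ z i := by
    rw [← Int.cast_nonneg_iff (R := ℝ), ← hz]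
    exact mul_nonneg k.cast_nonneg (hu_nonneg i)
  lift z to Fin n → ℕ using hz_nonneg
  refine ⟨z, funext hz, ?_⟩
  have hsum : ∑ i, (a i : ℝ) * z i = k * l := by
    rw [← hu_sum, mul_sum]
    refine sum_congr rfl fun i _ => ?_
    rw [← mul_left_comm]
    congr 1
    simpa using (hz i).symm
  exact_mod_cast hsum

theorem SplitsInDegree.isNormal_weightedSimplex (h : SplitsInDegree a l) (hl : l ≠ 0)
    (hal : ∀ i, a i ∣ l) : IsNormal (weightedSimplex a l) := by
  intro k hk x hx hx_int
  obtain ⟨y, rfl, hy⟩ := exists_natCast_eq_of_mem_dilate hl hal hx hx_int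
  obtain ⟨k, rfl⟩ := Nat.exists_eq_add_of_le' hk
  obtain ⟨f, hf, rfl⟩ := h.exists_eq_sum k y hy
  refine ⟨fun j i => f j i, fun j => ⟨(natCast_mem_weightedSimplex_iff hl hal).2 (hf j),
    fun i => ⟨f j i, by simp⟩⟩, ?_⟩
  ext i
  simp

end WeightedSimplex

theorem stmt_4_general {n : ℕ} {a : Fin n → ℕ} {l : ℕ} (hl : l ≠ 0) (hal : ∀ i, a i ∣ l)
    (hcard : (univ.image a).card ≤ 3) : IsNormal (weightedSimplex a l) := by
  have hsplit : SplitsInDegree (Subtype.val : univ.image a → ℕ) l :=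
    .of_card_le_three (by simpa using hcard) (by simpa using hal)
  exact (hsplit.comp fun i => ⟨a i, mem_image_of_mem a (mem_univ i)⟩).isNormal_weightedSimplex
    hl hal

/-- If the weights `a₀, …, aₙ` take at most 3 distinct values, then
the simplex `Δ_{a,l} = conv((l/a₀)e₀, …, (l/aₙ)eₙ) ⊂ ℝ^{n+1}` is normal. -/
theorem stmt_4 (n : ℕ) (a : Fin (n + 1) → ℕ) (ha : ∀ i, 0 < a i)
    (hcard : (Finset.univ.image a).card ≤ 3) :
    IsNormal (convexHull ℝ
      (Set.range fun i : Fin (n + 1) =>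
        Pi.single i ((Finset.univ.lcm a / a i : ℕ) : ℝ))) :=
  stmt_4_general (by simpa [Finset.lcm_eq_zero_iff] using fun i => (ha i).ne')
    (fun i => dvd_lcm (mem_univ i)) hcard
end

section
/- Let λ = (λ₁, …, λₙ) be an n-tuple of positive integers and let λ' = (λ_{i₁}, …, λ_{i_m}) with 1 ≤ i₁ < i₂ < ⋯ < i_m ≤ n be a subsequence of λ. If the rectangular simplex Δ(λ) ⊂ ℝⁿ is normal, then the rectangular simplex Δ(λ') ⊂ ℝᵐ is normal. -/
/-!
Extension by zero embeds `Δ(λ')` into `Δ(λ)` as a coordinate face, and the coordinate projection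
maps `Δ(λ)` back onto `Δ(λ')`. Both maps are linear and preserve lattice points, so a lattice point
of `kΔ(λ')` can be extended by zero, decomposed in `Δ(λ)`, and its summands projected back.
-/

open Function Set

variable {m n k : ℕ}

theorem IsLatticePoint.comp {x : Fin n → ℝ} (hx : IsLatticePoint x) (ι : Fin m → Fin n) :
    IsLatticePoint (x ∘ ι) :=
  fun i ↦ hx (ι i)

theorem IsLatticePoint.extend_zero {x : Fin m → ℝ} (hx : IsLatticePoint x) (ι : Fin m → Fin n) :
    IsLatticePoint (extend ι x 0) := by
  intro j
  rw [extend_def]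
  split_ifs with hj
  · exact hx hj.choose
  · exact ⟨0, Int.cast_zero.symm⟩

theorem IsIDP.of_leftInverse {P : Set (Fin m → ℝ)} {Q : Set (Fin n → ℝ)}
    (E : (Fin m → ℝ) →+ (Fin n → ℝ)) (R : (Fin n → ℝ) →+ (Fin m → ℝ)) (hRE : LeftInverse R E)
    (hE : MapsTo E P Q) (hR : MapsTo R Q P)
    (hE_lattice : ∀ x, IsLatticePoint x → IsLatticePoint (E x))
    (hR_lattice : ∀ y, IsLatticePoint y → IsLatticePoint (R y))
    (hQ : IsIDP k Q) : IsIDP k P := by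
  rintro x ⟨p, hp, rfl⟩ hx
  have hmem : E ((k : ℝ) • p) ∈ dilate k Q := ⟨E p, hE hp, (map_natCast_smul E ℝ ℝ k p).symm⟩
  obtain ⟨f, hf, hsum⟩ := hQ _ hmem (hE_lattice _ hx)
  refine ⟨fun i ↦ R (f i), fun i ↦ ⟨hR (hf i).1, hR_lattice _ (hf i).2⟩, ?_⟩
  calc (k : ℝ) • p = R (E ((k : ℝ) • p)) := (hRE _).symm
    _ = ∑ i, R (f i) := by rw [hsum, map_sum]

theorem zero_mem_rectSimplex (lam : Fin n → ℕ) : 0 ∈ rectSimplex lam :=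
  subset_convexHull ℝ _ (mem_insert _ _)

theorem single_mem_rectSimplex (lam : Fin n → ℕ) (i : Fin n) :
    Pi.single i (lam i : ℝ) ∈ rectSimplex lam :=
  subset_convexHull ℝ _ (mem_insert_of_mem _ (mem_range_self i))

theorem mapsTo_rectSimplex {F : Type*} [AddCommMonoid F] [Module ℝ F] {lam : Fin n → ℕ}
    {S : Set F} (hS : Convex ℝ S) (f : (Fin n → ℝ) →ₗ[ℝ] F) (hzero : 0 ∈ S)
    (hsingle : ∀ i, f (Pi.single i (lam i : ℝ)) ∈ S) :
    MapsTo f (rectSimplex lam) S := by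
  have hvertex_zero : 0 ∈ f ⁻¹' S := by rwa [mem_preimage, map_zero]
  exact convexHull_min (insert_subset hvertex_zero (range_subset_iff.2 hsingle))
    (hS.linear_preimage f)

theorem extend_single_zero {α β M : Type*} [DecidableEq α] [DecidableEq β] [Zero M] {ι : α → β}
    (hι : Injective ι) (i : α) (c : M) :
    extend ι (Pi.single i c) 0 = Pi.single (ι i) c := by
  funext j
  by_cases hj : j ∈ range ι
  · obtain ⟨l, rfl⟩ := hj
    simp only [hι.extend_apply, Pi.single_apply, hι.eq_iff]
  · have hne : j ≠ ι i := fun h ↦ hj ⟨i, h.symm⟩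
    rw [extend_apply' _ _ _ hj, Pi.single_eq_of_ne hne, Pi.zero_apply]

theorem mapsTo_extendByZero_rectSimplex (lam : Fin n → ℕ) {ι : Fin m → Fin n} (hι : Injective ι) :
    MapsTo (ExtendByZero.linearMap ℝ ι) (rectSimplex (lam ∘ ι)) (rectSimplex lam) := by
  refine mapsTo_rectSimplex (convex_convexHull ℝ _) _ (zero_mem_rectSimplex lam) fun i ↦ ?_
  have hvertex : ExtendByZero.linearMap ℝ ι (Pi.single i (lam (ι i) : ℝ)) =
      Pi.single (ι i) (lam (ι i) : ℝ) := extend_single_zero hι i _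
  exact hvertex ▸ single_mem_rectSimplex lam (ι i)

theorem mapsTo_funLeft_rectSimplex (lam : Fin n → ℕ) {ι : Fin m → Fin n} (hι : Injective ι) :
    MapsTo (LinearMap.funLeft ℝ ℝ ι) (rectSimplex lam) (rectSimplex (lam ∘ ι)) := by
  refine mapsTo_rectSimplex (convex_convexHull ℝ _) _ (zero_mem_rectSimplex _) fun j ↦ ?_
  by_cases hj : j ∈ range ι
  · obtain ⟨i, rfl⟩ := hj
    have hvertex : LinearMap.funLeft ℝ ℝ ι (Pi.single (ι i) (lam (ι i) : ℝ)) =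
        Pi.single i (lam (ι i) : ℝ) := update_comp_eq_of_injective (0 : Fin n → ℝ) hι i _
    exact hvertex ▸ single_mem_rectSimplex (lam ∘ ι) i
  · have hvertex : LinearMap.funLeft ℝ ℝ ι (Pi.single j (lam j : ℝ)) = 0 :=
      update_comp_eq_of_notMem_range (0 : Fin n → ℝ) _ hj
    exact hvertex.symm ▸ zero_mem_rectSimplex (lam ∘ ι)

theorem stmt_7_general (lam : Fin n → ℕ) {ι : Fin m → Fin n} (hι : Injective ι)
    (h : IsIDP k (rectSimplex lam)) : IsIDP k (rectSimplex (lam ∘ ι)) :=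
  h.of_leftInverse (ExtendByZero.linearMap ℝ ι).toAddMonoidHom
    (LinearMap.funLeft ℝ ℝ ι).toAddMonoidHom (fun x ↦ extend_comp hι x 0)
    (mapsTo_extendByZero_rectSimplex lam hι) (mapsTo_funLeft_rectSimplex lam hι)
    (fun _ hx ↦ hx.extend_zero ι) (fun _ hy ↦ hy.comp ι)

/-- If `Δ(λ)` is normal, then `Δ(λ')` is normal for every
subsequence `λ'` of `λ`. -/
theorem stmt_7 (n m : ℕ) (lam : Fin n → ℕ) (hlam : ∀ i, 0 < lam i)
    (ι : Fin m → Fin n) (hι : StrictMono ι)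
    (h : IsNormal (rectSimplex lam)) :
    IsNormal (rectSimplex (lam ∘ ι)) :=
  fun k hk ↦ stmt_7_general lam hι.injective (h k hk)
end

section
/- Let λ = (λ₁, …, λₙ) be an n-tuple of positive integers. The following are equivalent: (1) the interior of the rectangular simplex Δ(λ) ⊂ ℝⁿ contains a lattice point; (2) the point (1, 1, …, 1) lies in the interior of Δ(λ); (3) ∑_{i=1}^n 1/λᵢ < 1. (Since Δ(λ) is full-dimensional, its relative interior equals its topological interior.) -/
/-! In barycentric coordinates with respect to the vertices `0, λ₁e₁, …, λₙeₙ`, a point `x` is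
interior to `Δ(λ)` iff all its coordinates `1 - ∑ xᵢ/λᵢ` and `xᵢ/λᵢ` are positive. An interior
lattice point therefore has positive integer entries, hence dominates `(1, …, 1)`; and decreasing
the entries of an interior point while keeping them positive does not leave the interior. -/

open Module Set

section AffineBasisInsertZero

variable {ι k V : Type*} [Ring k] [AddCommGroup V] [Module k V]

theorem affineIndependent_option_elim_zero {v : ι → V} (hv : LinearIndependent k v) :
    AffineIndependent k fun o : Option ι ↦ o.elim 0 v := by
  classical
  rw [affineIndependent_iff_linearIndependent_vsub k _ none,
    ← linearIndependent_equiv (Equiv.optionSubtype none ⟨Equiv.refl (Option ι), rfl⟩)]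
  simpa [Function.comp_def] using hv

/-- The affine basis formed by the origin (at index `none`) and the vectors of a linear basis. -/
noncomputable def affineBasisInsertZero (b : Basis ι k V) : AffineBasis (Option ι) k V where
  toFun o := o.elim 0 b
  ind' := affineIndependent_option_elim_zero b.linearIndependent
  tot' := by
    rw [Option.range_elim, ← SetLike.coe_set_eq, affineSpan_insert_zero, b.span_eq]
    rfl

theorem affineBasisInsertZero_none (b : Basis ι k V) : affineBasisInsertZero b none = 0 := rfl

theorem affineBasisInsertZero_some (b : Basis ι k V) (i : ι) :
    affineBasisInsertZero b (some i) = b i := rfl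

theorem range_affineBasisInsertZero (b : Basis ι k V) :
    range (affineBasisInsertZero b) = insert 0 (range b) :=
  Option.range_elim 0 b

theorem affineBasisInsertZero_coord [Fintype ι] (b : Basis ι k V) (v : V) (o : Option ι) :
    (affineBasisInsertZero b).coord o v = o.elim (1 - ∑ i, b.repr v i) (b.repr v) := by
  let w : Option ι → k := fun o ↦ o.elim (1 - ∑ i, b.repr v i) (b.repr v)
  have hw : ∑ o, w o = 1 := by simp [w, Fintype.sum_option]
  have hv : Finset.univ.affineCombination k (affineBasisInsertZero b) w = v := by
    rw [Finset.univ.affineCombination_eq_linear_combination _ _ hw, Fintype.sum_option,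
      affineBasisInsertZero_none, smul_zero, zero_add]
    simp only [affineBasisInsertZero_some]
    exact b.sum_repr v
  conv_lhs => rw [← hv]
  exact (affineBasisInsertZero b).coord_apply_combination_of_mem (Finset.mem_univ o) hw

end AffineBasisInsertZero

section Interior

variable {ι : Type*} [Fintype ι]

theorem interior_convexHull_insert_zero_range_basis {E : Type*} [NormedAddCommGroup E]
    [NormedSpace ℝ E] (b : Basis ι ℝ E) :
    interior (convexHull ℝ (insert 0 (range b))) =
      {x | (∀ i, 0 < b.repr x i) ∧ ∑ i, b.repr x i < 1} := by
  rw [← range_affineBasisInsertZero, AffineBasis.interior_convexHull]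
  ext x
  simp [affineBasisInsertZero_coord, Option.forall, and_comm]

theorem interior_convexHull_insert_zero_range_single [DecidableEq ι] {a : ι → ℝ}
    (ha : ∀ i, a i ≠ 0) :
    interior (convexHull ℝ (insert 0 (range fun i ↦ Pi.single i (a i)))) =
      {x : ι → ℝ | (∀ i, 0 < x i / a i) ∧ ∑ i, x i / a i < 1} := by
  let b : Basis ι ℝ (ι → ℝ) := (Pi.basisFun ℝ ι).isUnitSMul fun i ↦ (ha i).isUnit
  have hb (i : ι) : b i = Pi.single i (a i) := by
    simp [b, Basis.isUnitSMul_apply, ← Pi.single_smul]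
  have hrepr (x : ι → ℝ) (i : ι) : b.repr x i = x i / a i := by
    simp [b, Basis.repr_isUnitSMul, Units.smul_def, div_eq_inv_mul]
  simpa only [hrepr, funext hb] using interior_convexHull_insert_zero_range_basis b

end Interior

section RectSimplex

variable {n : ℕ} {lam : Fin n → ℕ} {x y : Fin n → ℝ}

theorem mem_interior_rectSimplex (hlam : ∀ i, 0 < lam i) :
    x ∈ interior (rectSimplex lam) ↔ (∀ i, 0 < x i) ∧ ∑ i, x i / (lam i : ℝ) < 1 := by
  have hpos (i : Fin n) : (0 : ℝ) < lam i := Nat.cast_pos.2 (hlam i)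
  rw [rectSimplex, interior_convexHull_insert_zero_range_single fun i ↦ (hpos i).ne']
  simp only [mem_ofPred_eq, div_pos_iff_of_pos_right (hpos _)]

theorem mem_interior_rectSimplex_of_le (hlam : ∀ i, 0 < lam i)
    (hy : y ∈ interior (rectSimplex lam)) (hx : ∀ i, 0 < x i) (hxy : x ≤ y) :
    x ∈ interior (rectSimplex lam) := by
  rw [mem_interior_rectSimplex hlam] at hy ⊢
  refine ⟨hx, lt_of_le_of_lt ?_ hy.2⟩
  gcongr with i
  exact hxy i

theorem IsLatticePoint.one_le (hx : IsLatticePoint x) (hpos : ∀ i, 0 < x i) (i : Fin n) :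
    1 ≤ x i := by
  obtain ⟨z, hz⟩ := hx i
  have hz_pos : 0 < z := by exact_mod_cast hz ▸ hpos i
  rw [hz]
  exact_mod_cast Order.one_le_iff_pos.2 hz_pos

theorem isLatticePoint_one : IsLatticePoint (1 : Fin n → ℝ) := fun _ ↦ ⟨1, by simp⟩

end RectSimplex

/-- TFAE: (1) the interior of `Δ(λ)` contains a lattice point;
(2) `(1, …, 1) ∈ interior Δ(λ)`; (3) `∑ 1/λᵢ < 1`. -/
theorem stmt_10 (n : ℕ) (lam : Fin n → ℕ) (hlam : ∀ i, 0 < lam i) :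
    ((∃ x ∈ interior (rectSimplex lam), IsLatticePoint x) ↔
      (fun _ : Fin n => (1 : ℝ)) ∈ interior (rectSimplex lam)) ∧
    ((fun _ : Fin n => (1 : ℝ)) ∈ interior (rectSimplex lam) ↔
      (∑ i, (1 : ℝ) / (lam i : ℝ)) < 1) := by
  refine ⟨⟨?_, fun h ↦ ⟨1, h, isLatticePoint_one⟩⟩, ?_⟩
  · rintro ⟨x, hx, hx_lattice⟩
    have hx_pos : ∀ i, 0 < x i := ((mem_interior_rectSimplex hlam).1 hx).1
    exact mem_interior_rectSimplex_of_le hlam hx (fun _ ↦ one_pos) (hx_lattice.one_le hx_pos)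
  · rw [mem_interior_rectSimplex hlam]
    exact and_iff_right fun _ ↦ one_pos
end

section
/- Let λ = (λ₁, …, λₙ) be an n-tuple of positive integers and define d(λ) = ⌊∑_{i=1}^n 1/λᵢ⌋. If r is a positive integer with r ≥ n − d(λ), then the dilation rΔ(λ) is a normal polytope. -/
/-!
Under the linear functional `w x = ∑ xᵢ / λᵢ`, the dilation `cΔ(λ)` is `{x ≥ 0 | w x ≤ c}`.
Dividing each coordinate of a lattice point `x ≥ 0` by `λᵢ` with remainder writes `x` as a sum of
`Q = ∑ ⌊xᵢ / λᵢ⌋` vertices `λᵢeᵢ` of `Δ(λ)`, each of weight `1`, and a remainder of weight at most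
`∑ (λᵢ - 1) / λᵢ = n - ∑ 1 / λᵢ`, which is at most `r`. If `w x ≤ s + r`, split off `min s Q` of
the vertices: what is left is either the remainder alone or has weight `w x - s ≤ r`. Taking
`s = kr` and inducting on `k` splits off one lattice point of `rΔ(λ)` at a time.
-/

section Dilation

open scoped Pointwise

variable {n : ℕ} {P : Set (Fin n → ℝ)}

lemma dilate_eq_smul (k : ℕ) (P : Set (Fin n → ℝ)) : dilate k P = (k : ℝ) • P := rfl

lemma dilate_one (P : Set (Fin n → ℝ)) : dilate 1 P = P := by
  rw [dilate_eq_smul, Nat.cast_one, one_smul]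

lemma dilate_dilate (k r : ℕ) (P : Set (Fin n → ℝ)) :
    dilate k (dilate r P) = dilate (k * r) P := by
  simp only [dilate_eq_smul, smul_smul, Nat.cast_mul]

lemma mem_dilate_iff {k : ℕ} (hk : 0 < k) {x : Fin n → ℝ} :
    x ∈ dilate k P ↔ (k : ℝ)⁻¹ • x ∈ P := by
  rw [dilate_eq_smul, Set.mem_smul_set_iff_inv_smul_mem₀ (Nat.cast_ne_zero.2 hk.ne')]

lemma isLatticePoint_natCast (x : Fin n → ℕ) : IsLatticePoint fun i => (x i : ℝ) :=
  fun i => ⟨x i, (Int.cast_natCast (x i)).symm⟩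

lemma exists_natCast_eq_of_isLatticePoint {x : Fin n → ℝ} (hx : IsLatticePoint x) (h0 : 0 ≤ x) :
    ∃ m : Fin n → ℕ, x = fun i => (m i : ℝ) := by
  choose z hz using hx
  refine ⟨fun i => (z i).toNat, funext fun i => ?_⟩
  have hzi : (0 : ℝ) ≤ z i := (h0 i).trans_eq (hz i)
  rw [hz i]
  exact_mod_cast (Int.toNat_of_nonneg (Int.cast_nonneg_iff.1 hzi)).symm

lemma isIDP_one (P : Set (Fin n → ℝ)) : IsIDP 1 P := fun x hx hlat =>
  ⟨fun _ => x, fun _ => ⟨dilate_one P ▸ hx, hlat⟩, by simp⟩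

lemma IsIDP.succ {k : ℕ} (hP : IsIDP k P)
    (hsplit : ∀ x ∈ dilate (k + 1) P, IsLatticePoint x →
      ∃ y ∈ dilate k P, ∃ z ∈ P, IsLatticePoint y ∧ IsLatticePoint z ∧ x = y + z) :
    IsIDP (k + 1) P := by
  intro x hx hlat
  obtain ⟨y, hy, z, hz, hylat, hzlat, rfl⟩ := hsplit x hx hlat
  obtain ⟨f, hf, rfl⟩ := hP y hy hylat
  refine ⟨Fin.snoc f z, fun i => ?_, ?_⟩
  · cases i using Fin.lastCases with
    | last => simpa only [Fin.snoc_last] using ⟨hz, hzlat⟩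
    | cast i => simpa only [Fin.snoc_castSucc] using hf i
  · simp only [Fin.sum_univ_castSucc, Fin.snoc_castSucc, Fin.snoc_last]

end Dilation

section RectWeight

variable {ι : Type*} [Fintype ι] {lam : ι → ℕ}

/-- The linear functional `x ↦ ∑ xᵢ / λᵢ`, equal to `1` on the facet of `Δ(λ)` opposite the
origin. -/
noncomputable def rectWeight (lam : ι → ℕ) : (ι → ℝ) →ₗ[ℝ] ℝ :=
  Fintype.linearCombination ℝ fun i => (lam i : ℝ)⁻¹

lemma rectWeight_apply (lam : ι → ℕ) (x : ι → ℝ) : rectWeight lam x = ∑ i, x i / lam i := by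
  simp only [rectWeight, Fintype.linearCombination_apply, smul_eq_mul, div_eq_mul_inv]

lemma rectWeight_single [DecidableEq ι] (hlam : ∀ i, 0 < lam i) (i : ι) :
    rectWeight lam (Pi.single i (lam i : ℝ)) = 1 := by
  rw [rectWeight, Fintype.linearCombination_apply_single, smul_eq_mul]
  exact mul_inv_cancel₀ (Nat.cast_ne_zero.2 (hlam i).ne')

lemma rectWeight_natCast_add (lam x y : ι → ℕ) :
    rectWeight lam (fun i => ((x + y) i : ℝ)) =
      rectWeight lam (fun i => (x i : ℝ)) + rectWeight lam (fun i => (y i : ℝ)) := by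
  rw [← map_add]
  exact congrArg _ (funext fun i => Nat.cast_add (x i) (y i))

lemma rectWeight_natCast_mul (hlam : ∀ i, 0 < lam i) (p : ι → ℕ) :
    rectWeight lam (fun i => ((lam * p) i : ℝ)) = (∑ i, p i : ℕ) := by
  rw [rectWeight_apply, Nat.cast_sum]
  refine Finset.sum_congr rfl fun i _ => ?_
  rw [Pi.mul_apply, Nat.cast_mul, mul_div_cancel_left₀ _ (Nat.cast_ne_zero.2 (hlam i).ne')]

lemma rectWeight_natCast_mod_le (hlam : ∀ i, 0 < lam i) (x : ι → ℕ) :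
    rectWeight lam (fun i => ((x i % lam i : ℕ) : ℝ)) ≤
      Fintype.card ι - ∑ i, 1 / (lam i : ℝ) := by
  calc rectWeight lam (fun i => ((x i % lam i : ℕ) : ℝ))
      = ∑ i, ((x i % lam i : ℕ) : ℝ) / lam i := rectWeight_apply _ _
    _ ≤ ∑ i, (1 - 1 / (lam i : ℝ)) := Finset.sum_le_sum fun i _ => by
        have hpos : (0 : ℝ) < lam i := Nat.cast_pos.2 (hlam i)
        have hlt : ((x i % lam i : ℕ) : ℝ) + 1 ≤ lam i := by exact_mod_cast Nat.mod_lt _ (hlam i)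
        rw [one_sub_div hpos.ne']
        gcongr
        linarith
    _ = Fintype.card ι - ∑ i, 1 / (lam i : ℝ) := by simp [Finset.sum_sub_distrib]

lemma exists_le_sum_eq_s11 (q : ι → ℕ) {s : ℕ} (hs : s ≤ ∑ i, q i) : ∃ p ≤ q, ∑ i, p i = s := by
  obtain ⟨p, hpq, hp⟩ := Finsupp.exists_le_degree_eq (Finsupp.equivFunOnFinite.symm q) s
    (by simpa [Finsupp.degree_eq_sum] using hs)
  exact ⟨p, hpq, by simpa only [Finsupp.degree_eq_sum] using hp⟩

lemma exists_add_eq_of_rectWeight_le (hlam : ∀ i, 0 < lam i) {r : ℝ}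
    (hr : Fintype.card ι - ∑ i, 1 / (lam i : ℝ) ≤ r) (s : ℕ) {x : ι → ℕ}
    (hx : rectWeight lam (fun i => (x i : ℝ)) ≤ s + r) :
    ∃ y z : ι → ℕ, x = y + z ∧ rectWeight lam (fun i => (y i : ℝ)) ≤ s ∧
      rectWeight lam (fun i => (z i : ℝ)) ≤ r := by
  rcases le_total (∑ i, (x / lam) i) s with hQ | hQ
  · refine ⟨lam * (x / lam), fun i => x i % lam i,
      funext fun i => (Nat.div_add_mod (x i) (lam i)).symm, ?_,
      (rectWeight_natCast_mod_le hlam x).trans hr⟩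
    rw [rectWeight_natCast_mul hlam]
    exact_mod_cast hQ
  · obtain ⟨p, hp, hps⟩ := exists_le_sum_eq_s11 (x / lam) hQ
    have hle : lam * p ≤ x := fun i =>
      (Nat.mul_le_mul_left (lam i) (hp i)).trans (Nat.mul_div_le (x i) (lam i))
    obtain ⟨z, rfl⟩ := exists_add_of_le hle
    have hweight : rectWeight lam (fun i => ((lam * p) i : ℝ)) = s := by
      rw [rectWeight_natCast_mul hlam, hps]
    refine ⟨lam * p, z, rfl, hweight.le, ?_⟩
    rwa [rectWeight_natCast_add, hweight, add_le_add_iff_left] at hx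

end RectWeight

section RectSimplex

variable {n : ℕ} {lam : Fin n → ℕ}

lemma rectSimplex_subset_Ici_inter_rectWeight_le (hlam : ∀ i, 0 < lam i) :
    rectSimplex lam ⊆ Set.Ici 0 ∩ {x | rectWeight lam x ≤ 1} := by
  refine convexHull_min ?_ ((convex_Ici 0).inter (convex_halfSpace_le (rectWeight lam).isLinear 1))
  rintro _ (rfl | ⟨i, rfl⟩)
  · simp
  · exact ⟨Pi.single_nonneg.2 (Nat.cast_nonneg _), (rectWeight_single hlam i).le⟩

lemma mem_rectSimplex_of_rectWeight_le (hlam : ∀ i, 0 < lam i) {x : Fin n → ℝ} (h0 : 0 ≤ x)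
    (h1 : rectWeight lam x ≤ 1) : x ∈ rectSimplex lam := by
  refine mem_convexHull_of_exists_fintype (ι := Option (Fin n))
    (fun o => o.elim (1 - rectWeight lam x) fun i => x i / lam i)
    (fun o => o.elim 0 fun i => Pi.single i (lam i : ℝ)) ?_ ?_ ?_ ?_
  · rintro (_ | i)
    · exact sub_nonneg.2 h1
    · exact div_nonneg (h0 i) (Nat.cast_nonneg _)
  · simp [Fintype.sum_option, rectWeight_apply]
  · rintro (_ | i)
    · exact Set.mem_insert _ _
    · exact Set.mem_insert_of_mem _ ⟨i, rfl⟩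
  · have hcoord (i : Fin n) : x i / lam i * lam i = x i :=
      div_mul_cancel₀ _ (Nat.cast_ne_zero.2 (hlam i).ne')
    simp only [Fintype.sum_option, Option.elim_none, Option.elim_some, smul_zero, zero_add,
      ← Pi.single_smul, smul_eq_mul, hcoord, Finset.univ_sum_single]

lemma mem_rectSimplex_iff (hlam : ∀ i, 0 < lam i) {x : Fin n → ℝ} :
    x ∈ rectSimplex lam ↔ 0 ≤ x ∧ rectWeight lam x ≤ 1 :=
  ⟨fun hx => rectSimplex_subset_Ici_inter_rectWeight_le hlam hx,
    fun h => mem_rectSimplex_of_rectWeight_le hlam h.1 h.2⟩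

lemma mem_dilate_rectSimplex_iff (hlam : ∀ i, 0 < lam i) {c : ℕ} (hc : 0 < c) {x : Fin n → ℝ} :
    x ∈ dilate c (rectSimplex lam) ↔ 0 ≤ x ∧ rectWeight lam x ≤ c := by
  have hc' : (0 : ℝ) < c := Nat.cast_pos.2 hc
  rw [mem_dilate_iff hc, mem_rectSimplex_iff hlam,
    smul_nonneg_iff_nonneg_of_pos_left (inv_pos.2 hc'), map_smul, smul_eq_mul, inv_mul_le_one₀ hc']

lemma exists_add_eq_of_mem_dilate_rectSimplex (hlam : ∀ i, 0 < lam i) {r s : ℕ} (hr : 0 < r)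
    (hs : 0 < s) (h : (n : ℝ) - ∑ i, 1 / (lam i : ℝ) ≤ r) {x : Fin n → ℝ}
    (hx : x ∈ dilate (s + r) (rectSimplex lam)) (hlat : IsLatticePoint x) :
    ∃ y ∈ dilate s (rectSimplex lam), ∃ z ∈ dilate r (rectSimplex lam),
      IsLatticePoint y ∧ IsLatticePoint z ∧ x = y + z := by
  rw [mem_dilate_rectSimplex_iff hlam (Nat.add_pos_left hs r), Nat.cast_add] at hx
  obtain ⟨m, rfl⟩ := exists_natCast_eq_of_isLatticePoint hlat hx.1
  obtain ⟨y, z, rfl, hy, hz⟩ :=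
    exists_add_eq_of_rectWeight_le hlam (by rwa [Fintype.card_fin]) s hx.2
  exact ⟨_, (mem_dilate_rectSimplex_iff hlam hs).2 ⟨fun i => Nat.cast_nonneg (y i), hy⟩,
    _, (mem_dilate_rectSimplex_iff hlam hr).2 ⟨fun i => Nat.cast_nonneg (z i), hz⟩,
    isLatticePoint_natCast y, isLatticePoint_natCast z, funext fun i => Nat.cast_add (y i) (z i)⟩

end RectSimplex

/-- With `d(λ) = ⌊∑ 1/λᵢ⌋`, if `r ≥ n - d(λ)` is a positive
integer, then `rΔ(λ)` is normal. -/
theorem stmt_11 (n : ℕ) (lam : Fin n → ℕ) (hlam : ∀ i, 0 < lam i)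
    (r : ℕ) (hr : 0 < r)
    (h : (n : ℤ) - ⌊∑ i, (1 : ℝ) / (lam i : ℝ)⌋ ≤ (r : ℤ)) :
    IsNormal (dilate r (rectSimplex lam)) := by
  have hsum : (n : ℝ) - ∑ i, 1 / (lam i : ℝ) ≤ r :=
    (sub_le_sub_left (Int.floor_le _) _).trans (by exact_mod_cast h)
  intro k hk
  induction k, hk using Nat.le_induction with
  | base => exact isIDP_one _
  | succ k hk ih =>
    refine ih.succ fun x hx hlat => ?_
    rw [dilate_dilate] at hx ⊢
    rw [Nat.succ_mul] at hx
    exact exists_add_eq_of_mem_dilate_rectSimplex hlam hr (Nat.mul_pos hk hr) hsum hx hlat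
end

section
/- Let λ = (λ₁, …, λₙ) be an n-tuple of positive integers, let i ∈ {1, …, n} and let ℓᵢ = lcm(λ₁, …, λ_{i−1}, λ_{i+1}, …, λₙ). Then μ_norm(Δ(λ₁, …, λₙ)) = μ_norm(Δ(λ₁, …, λ_{i−1}, λᵢ + ℓᵢ, λ_{i+1}, …, λₙ)). -/
/-!
The lattice points of `r Δ(a, μ)` over a point `y` of `r Δ(μ)` form a column whose top is at
height `⌊a (r - w y)⌋`, where `w y = ∑ j, y j / μ j`. Since a column is downward closed,
`r Δ(a, μ)` has the integer decomposition property exactly when every lattice point `y` of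
`r Δ(μ)` splits into `r` lattice points `f s` of `Δ(μ)` whose columns have total height at
least that of the column of `y`. If every `μ j` divides `L`, then `L (r - w y)` is an integer,
so replacing `a` by `a + L` raises the column over `y` by exactly this integer. These increments
add up over any splitting of `y`, so the criterion is the same for `a` and `a + L`. Dilating by
`k` multiplies `a`, `μ` and `L` by `k`, which preserves the divisibility, so normality is
unchanged for every dilation.
-/

theorem exists_le_sum_eq_s12 {ι : Type*} [Fintype ι] (t : ι → ℕ) {b : ℕ} (hb : b ≤ ∑ s, t s) :
    ∃ g ≤ t, ∑ s, g s = b := by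
  obtain ⟨g, hg, hsum⟩ := Finsupp.exists_le_degree_eq (Finsupp.equivFunOnFinite.symm t) b
    (by simpa [Finsupp.degree_eq_sum] using hb)
  exact ⟨g, hg, by rw [← hsum, Finsupp.degree_eq_sum]⟩

theorem smul_insertNth {M α : Type*} [SMul M α] {n : ℕ} (c : M) (i : Fin (n + 1)) (a : α)
    (f : Fin n → α) :
    c • (i.insertNth a f : Fin (n + 1) → α) = i.insertNth (c • a) (c • f) :=
  funext <| (Fin.forall_iff_succAbove i).2 ⟨by simp, by simp⟩

section SimplexWeight

variable {ι : Type*} [Fintype ι]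

/-- The linear functional `x ↦ ∑ j, x j / μ j`, which cuts the rectangular simplex `Δ(μ)`
out of the nonnegative orthant as the region where it is at most `1`. -/
noncomputable def simplexWeight (μ : ι → ℕ) : (ι → ℝ) →ₗ[ℝ] ℝ :=
  ∑ j, (μ j : ℝ)⁻¹ • LinearMap.proj j

theorem simplexWeight_apply (μ : ι → ℕ) (x : ι → ℝ) : simplexWeight μ x = ∑ j, x j / μ j := by
  simp [simplexWeight, div_eq_inv_mul]

theorem simplexWeight_natCast_sum (μ : ι → ℕ) {κ : Type*} [Fintype κ] (f : κ → ι → ℕ) :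
    simplexWeight μ (fun j ↦ (∑ s, f s) j) = ∑ s, simplexWeight μ (fun j ↦ f s j) := by
  rw [← map_sum]
  congr 1
  ext j
  simp

theorem simplexWeight_nsmul (k : ℕ) (μ : ι → ℕ) (x : ι → ℝ) :
    simplexWeight (k • μ) x = (k : ℝ)⁻¹ * simplexWeight μ x := by
  simp [simplexWeight_apply, Finset.mul_sum, div_eq_inv_mul, mul_assoc, mul_left_comm]

theorem simplexWeight_insertNth {n : ℕ} (i : Fin (n + 1)) (a b : ℕ) (μ y : Fin n → ℕ) :
    simplexWeight (i.insertNth a μ) (fun j ↦ (i.insertNth b y : Fin (n + 1) → ℕ) j) =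
      b / a + simplexWeight μ (fun j ↦ y j) := by
  simp [simplexWeight_apply, Fin.sum_univ_succAbove _ i]

theorem exists_nat_eq_mul_simplexWeight {μ : ι → ℕ} {L : ℕ} (hL : ∀ j, μ j ∣ L) (y : ι → ℕ) :
    ∃ m : ℕ, (m : ℝ) = L * simplexWeight μ (fun j ↦ y j) := by
  refine ⟨∑ j, L / μ j * y j, ?_⟩
  rw [simplexWeight_apply, Finset.mul_sum, Nat.cast_sum]
  refine Finset.sum_congr rfl fun j _ ↦ ?_
  rw [Nat.cast_mul, Nat.cast_div_charZero (hL j)]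
  ring

end SimplexWeight

section RectSimplex

variable {n : ℕ}

open scoped Pointwise in
theorem dilate_rectSimplex (k : ℕ) (lam : Fin n → ℕ) :
    dilate k (rectSimplex lam) = rectSimplex (k • lam) := by
  have smul_vertex (j : Fin n) :
      (k : ℝ) • (Pi.single j (lam j : ℝ) : Fin n → ℝ) = Pi.single j (((k • lam) j : ℕ) : ℝ) := by
    rw [← Pi.single_smul]
    simp
  change (k : ℝ) • rectSimplex lam = _
  simp only [rectSimplex, ← convexHull_smul, Set.smul_set_insert, smul_zero, ← Set.range_smul,
    Pi.smul_def, smul_vertex]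

variable {lam : Fin n → ℕ}

theorem mem_rectSimplex (hlam : ∀ j, 0 < lam j) {x : Fin n → ℝ} :
    x ∈ rectSimplex lam ↔ 0 ≤ x ∧ simplexWeight lam x ≤ 1 := by
  have lam_ne (j : Fin n) : (lam j : ℝ) ≠ 0 := Nat.cast_ne_zero.2 (hlam j).ne'
  constructor
  · have convex : Convex ℝ (Set.Ici 0 ∩ {x | simplexWeight lam x ≤ 1}) :=
      (convex_Ici 0).inter (convex_halfSpace_le (simplexWeight lam).isLinear 1)
    refine fun hx ↦ convexHull_min ?_ convex hx
    rintro _ (rfl | ⟨j, rfl⟩)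
    · simp
    · simp [simplexWeight_apply, Pi.single_apply, ite_div, lam_ne]
  · rintro ⟨x_nonneg, weight_le⟩
    refine mem_convexHull_of_exists_fintype
      (fun o : Option (Fin n) ↦ o.elim (1 - simplexWeight lam x) fun j ↦ x j / lam j)
      (fun o ↦ o.elim 0 fun j ↦ Pi.single j (lam j : ℝ)) ?_ ?_ ?_ ?_
    · rintro (_ | j)
      · simpa using weight_le
      · exact div_nonneg (x_nonneg j) (Nat.cast_nonneg _)
    · simp [Fintype.sum_option, simplexWeight_apply]
    · rintro (_ | j) <;> simp
    · ext j
      simp [Fintype.sum_option, Finset.sum_apply, Pi.single_apply, lam_ne]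

theorem mem_dilate_rectSimplex (hlam : ∀ j, 0 < lam j) {r : ℕ} (hr : 0 < r) {x : Fin n → ℝ} :
    x ∈ dilate r (rectSimplex lam) ↔ 0 ≤ x ∧ simplexWeight lam x ≤ r := by
  have smul_pos (j : Fin n) : 0 < (r • lam) j := Nat.mul_pos hr (hlam j)
  rw [dilate_rectSimplex, mem_rectSimplex smul_pos, simplexWeight_nsmul,
    inv_mul_le_iff₀ (Nat.cast_pos.2 hr), mul_one]

theorem isLatticePoint_natCast_s12 (y : Fin n → ℕ) : IsLatticePoint (fun j ↦ (y j : ℝ)) :=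
  fun j ↦ ⟨y j, by simp⟩

theorem IsLatticePoint.exists_natCast_eq {x : Fin n → ℝ} (hx : IsLatticePoint x) (h0 : 0 ≤ x) :
    ∃ y : Fin n → ℕ, (fun j ↦ (y j : ℝ)) = x := by
  choose z hz using hx
  have z_nonneg (j : Fin n) : 0 ≤ z j := by simpa [hz j] using h0 j
  lift z to Fin n → ℕ using z_nonneg
  exact ⟨z, by ext j; simp [hz j]⟩

theorem isIDP_rectSimplex_iff (hlam : ∀ j, 0 < lam j) {r : ℕ} (hr : 0 < r) :
    IsIDP r (rectSimplex lam) ↔ ∀ x : Fin n → ℕ, simplexWeight lam (fun j ↦ x j) ≤ r →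
      ∃ f : Fin r → Fin n → ℕ, (∀ s, simplexWeight lam (fun j ↦ f s j) ≤ 1) ∧ x = ∑ s, f s := by
  constructor
  · intro h x hx
    obtain ⟨f, hf, hsum⟩ := h _ ((mem_dilate_rectSimplex hlam hr).2
      ⟨fun j ↦ Nat.cast_nonneg _, hx⟩) (isLatticePoint_natCast_s12 x)
    have f_mem (s : Fin r) := (mem_rectSimplex hlam).1 (hf s).1
    choose g hg using fun s ↦ (hf s).2.exists_natCast_eq (f_mem s).1
    refine ⟨g, fun s ↦ (hg s).symm ▸ (f_mem s).2, funext fun j ↦ ?_⟩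
    have coord_eq := congrFun hsum j
    simp only [← hg, Finset.sum_apply] at coord_eq ⊢
    exact_mod_cast coord_eq
  · intro h x hx hlattice
    rw [mem_dilate_rectSimplex hlam hr] at hx
    obtain ⟨y, rfl⟩ := hlattice.exists_natCast_eq hx.1
    obtain ⟨f, hf, rfl⟩ := h y hx.2
    refine ⟨fun s j ↦ f s j, fun s ↦ ⟨(mem_rectSimplex hlam).2
      ⟨fun j ↦ Nat.cast_nonneg _, hf s⟩, isLatticePoint_natCast_s12 _⟩, ?_⟩
    ext j
    simp

end RectSimplex

section ColumnHeight

variable {n : ℕ}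

/-- The height of the column of lattice points of `r Δ(a, μ)` over the lattice point `y` of
`r Δ(μ)`. The floor is that of `ℕ`, which gives `0` when `y` lies outside `r Δ(μ)`. -/
noncomputable def columnHeight (a : ℕ) (μ : Fin n → ℕ) (r : ℕ) (y : Fin n → ℕ) : ℕ :=
  ⌊a * (r - simplexWeight μ (fun j ↦ y j))⌋₊

variable {a : ℕ} {μ : Fin n → ℕ}

theorem simplexWeight_insertNth_le_iff (i : Fin (n + 1)) (ha : 0 < a) {r b : ℕ} {y : Fin n → ℕ} :
    simplexWeight (i.insertNth a μ) (fun j ↦ (i.insertNth b y : Fin (n + 1) → ℕ) j) ≤ r ↔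
      simplexWeight μ (fun j ↦ y j) ≤ r ∧ b ≤ columnHeight a μ r y := by
  have ha' : (0 : ℝ) < a := Nat.cast_pos.2 ha
  rw [simplexWeight_insertNth, ← le_sub_iff_add_le, div_le_iff₀' ha']
  constructor
  · exact fun h ↦
      ⟨sub_nonneg.1 (nonneg_of_mul_nonneg_right (b.cast_nonneg.trans h) ha'), Nat.le_floor h⟩
  · rintro ⟨weight_le, le_height⟩
    exact (Nat.le_floor_iff (mul_nonneg ha'.le (sub_nonneg.2 weight_le))).1 le_height

theorem isIDP_rectSimplex_insertNth_iff (i : Fin (n + 1)) (ha : 0 < a) (hμ : ∀ j, 0 < μ j) {r : ℕ}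
    (hr : 0 < r) :
    IsIDP r (rectSimplex (i.insertNth a μ)) ↔
      ∀ y : Fin n → ℕ, simplexWeight μ (fun j ↦ y j) ≤ r →
        ∃ f : Fin r → Fin n → ℕ, y = ∑ s, f s ∧ (∀ s, simplexWeight μ (fun j ↦ f s j) ≤ 1) ∧
          columnHeight a μ r y ≤ ∑ s, columnHeight a μ 1 (f s) := by
  have insertNth_pos : ∀ j, 0 < (i.insertNth a μ : Fin (n + 1) → ℕ) j :=
    (Fin.forall_iff_succAbove i).2 ⟨by simpa using ha, by simpa using hμ⟩
  rw [isIDP_rectSimplex_iff insertNth_pos hr]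
  constructor
  · intro h y hy
    obtain ⟨f, hf, hsum⟩ := h (i.insertNth (columnHeight a μ r y) y)
      ((simplexWeight_insertNth_le_iff i ha).2 ⟨hy, le_rfl⟩)
    have f_mem (s : Fin r) : simplexWeight μ (fun j ↦ i.removeNth (f s) j) ≤ (1 : ℕ) ∧
        f s i ≤ columnHeight a μ 1 (i.removeNth (f s)) := by
      rw [← simplexWeight_insertNth_le_iff i ha, Fin.insertNth_self_removeNth]
      exact_mod_cast hf s
    obtain ⟨height_eq, y_eq⟩ := Fin.insertNth_eq_iff.1 hsum
    refine ⟨fun s ↦ i.removeNth (f s), ?_, fun s ↦ by simpa using (f_mem s).1, ?_⟩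
    · rw [y_eq]
      ext j
      simp [Fin.removeNth]
    · rw [height_eq, Finset.sum_apply]
      exact Finset.sum_le_sum fun s _ ↦ (f_mem s).2
  · intro h x hx
    rw [← Fin.insertNth_self_removeNth i x, simplexWeight_insertNth_le_iff i ha] at hx
    obtain ⟨f, hsum, hf, height_le⟩ := h _ hx.1
    obtain ⟨b, b_le, b_sum⟩ := exists_le_sum_eq_s12 _ (hx.2.trans height_le)
    refine ⟨fun s ↦ i.insertNth (b s) (f s), fun s ↦ ?_, ?_⟩
    · exact_mod_cast (simplexWeight_insertNth_le_iff (r := 1) i ha).2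
        ⟨by simpa using hf s, b_le s⟩
    · refine funext <| (Fin.forall_iff_succAbove i).2 ⟨by simp [b_sum], fun j ↦ ?_⟩
      simpa [Fin.removeNth] using congrFun hsum j

theorem columnHeight_add {L : ℕ} (hL : ∀ j, μ j ∣ L) {r : ℕ} {y : Fin n → ℕ}
    (hy : simplexWeight μ (fun j ↦ y j) ≤ r) :
    (columnHeight (a + L) μ r y : ℝ) =
      columnHeight a μ r y + L * (r - simplexWeight μ (fun j ↦ y j)) := by
  obtain ⟨m, hm⟩ := exists_nat_eq_mul_simplexWeight hL y
  have hm_le : m ≤ L * r := by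
    exact_mod_cast hm.trans_le (mul_le_mul_of_nonneg_left hy L.cast_nonneg)
  have increment_eq : L * (r - simplexWeight μ (fun j ↦ y j)) = ((L * r - m : ℕ) : ℝ) := by
    rw [Nat.cast_sub hm_le, hm]
    push_cast
    ring
  rw [columnHeight, Nat.cast_add, add_mul, increment_eq,
    Nat.floor_add_natCast (mul_nonneg a.cast_nonneg (sub_nonneg.2 hy)), Nat.cast_add, columnHeight]

theorem columnHeight_add_le_sum_iff {L : ℕ} (hL : ∀ j, μ j ∣ L) {r : ℕ}
    {f : Fin r → Fin n → ℕ} (hf : ∀ s, simplexWeight μ (fun j ↦ f s j) ≤ 1) :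
    columnHeight (a + L) μ r (∑ s, f s) ≤ ∑ s, columnHeight (a + L) μ 1 (f s) ↔
      columnHeight a μ r (∑ s, f s) ≤ ∑ s, columnHeight a μ 1 (f s) := by
  have weight_le : simplexWeight μ (fun j ↦ (∑ s, f s) j) ≤ r := by
    rw [simplexWeight_natCast_sum]
    simpa using Finset.sum_le_sum fun s (_ : s ∈ Finset.univ) ↦ hf s
  have increment_sum : ∑ s, L * (1 - simplexWeight μ (fun j ↦ f s j)) =
      L * (r - simplexWeight μ (fun j ↦ (∑ s, f s) j)) := by
    rw [simplexWeight_natCast_sum, ← Finset.mul_sum]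
    simp
  have height_summand (s : Fin r) : (columnHeight (a + L) μ 1 (f s) : ℝ) =
      columnHeight a μ 1 (f s) + L * (1 - simplexWeight μ (fun j ↦ f s j)) := by
    simpa using columnHeight_add (a := a) (r := 1) hL (by simpa using hf s)
  rw [← Nat.cast_le (α := ℝ), ← Nat.cast_le (α := ℝ), Nat.cast_sum, Nat.cast_sum,
    columnHeight_add hL weight_le]
  simp only [height_summand, Finset.sum_add_distrib, increment_sum, add_le_add_iff_right]

theorem isNormal_rectSimplex_insertNth_add (i : Fin (n + 1)) (ha : 0 < a) (hμ : ∀ j, 0 < μ j)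
    {L : ℕ} (hL : ∀ j, μ j ∣ L) :
    IsNormal (rectSimplex (i.insertNth (a + L) μ)) ↔ IsNormal (rectSimplex (i.insertNth a μ)) := by
  refine forall₂_congr fun r hr ↦ ?_
  rw [isIDP_rectSimplex_insertNth_iff i (Nat.add_pos_left ha L) hμ hr,
    isIDP_rectSimplex_insertNth_iff i ha hμ hr]
  refine forall₂_congr fun y _ ↦ exists_congr fun f ↦ and_congr_right ?_
  rintro rfl
  exact and_congr_right fun hf ↦ columnHeight_add_le_sum_iff hL hf

theorem munorm_rectSimplex_insertNth_add (i : Fin (n + 1)) (ha : 0 < a) (hμ : ∀ j, 0 < μ j)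
    {L : ℕ} (hL : ∀ j, μ j ∣ L) :
    munorm (rectSimplex (i.insertNth (a + L) μ)) = munorm (rectSimplex (i.insertNth a μ)) := by
  have normal_iff (k : ℕ) : IsNormal (dilate k (rectSimplex (i.insertNth (a + L) μ))) ↔
      IsNormal (dilate k (rectSimplex (i.insertNth a μ))) := by
    simp only [dilate_rectSimplex, smul_insertNth]
    obtain rfl | hk := k.eq_zero_or_pos
    · simp
    · rw [smul_add]
      exact isNormal_rectSimplex_insertNth_add i (Nat.mul_pos hk ha)
        (fun j ↦ Nat.mul_pos hk (hμ j)) fun j ↦ Nat.mul_dvd_mul_left k (hL j)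
  simp only [munorm, normal_iff]

end ColumnHeight

/-- periodicity of the normality index. With
`ℓᵢ = lcm(λ₁, …, λ_{i-1}, λ_{i+1}, …, λₙ)`,
`μ_norm(Δ(λ)) = μ_norm(Δ(λ₁, …, λᵢ + ℓᵢ, …, λₙ))`. -/
theorem stmt_12 (n : ℕ) (lam : Fin n → ℕ) (hlam : ∀ i, 0 < lam i) (i : Fin n) :
    munorm (rectSimplex lam) =
      munorm (rectSimplex
        (Function.update lam i (lam i + (Finset.univ.erase i).lcm lam))) := by
  obtain _ | n := n
  · exact i.elim0
  set L := (Finset.univ.erase i).lcm lam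
  have dvd_L (j : Fin n) : i.removeNth lam j ∣ L :=
    Finset.dvd_lcm (Finset.mem_erase.2 ⟨i.succAbove_ne j, Finset.mem_univ _⟩)
  calc munorm (rectSimplex lam)
      = munorm (rectSimplex (i.insertNth (lam i) (i.removeNth lam))) := by
        rw [Fin.insertNth_self_removeNth]
    _ = munorm (rectSimplex (i.insertNth (lam i + L) (i.removeNth lam))) :=
        (munorm_rectSimplex_insertNth_add i (hlam i) (fun j ↦ hlam (i.succAbove j)) dvd_L).symm
    _ = munorm (rectSimplex (Function.update lam i (lam i + L))) := by
        rw [Fin.insertNth_removeNth]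
end
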